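/- Let n ≥ 6 be a natural number. The genus-zero Hurwitz number h_{1^3} with one degenerate branch point of reduced ramification type 1^3 (i.e., one permutation of cycle type (2,2,2,1^{n-6})) and m = 2n−5 simple branch points satisfies h_{1^3} = (4/3)·((2n−5)!/(n−6)!)·n^{n−6}. -/

import Mathlib

open Equiv

/-!
Hurwitz's genus-zero formula is proved in a form that is stable under induction. Let `σ` be a
permutation and `V` a partition of its domain into unions of cycles of `σ`. The factorizations of
`σ` into the least possible number `m` of transpositions generating a group with orbits `V` number
`m!` times the product, over the classes of `V`, of `n ^ (ℓ - 3) ∏ k ^ (k + 1) / k!`, where the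
class has `n` elements and `ℓ` cycles, of lengths `k`.

Removing the first transposition of a factorization either joins two cycles of `σ`, and the orbits
remain the same, or it cuts a cycle in two, and the orbit containing it splits as well; the
Riemann–Hurwitz inequality excludes all other cases. The product formula satisfies the resulting
recursion: Hurwitz's multinomial extension of Abel's binomial theorem evaluates the sum over the
splittings of an orbit, and what remains is a sum over pairs of cycles, in which a partial fraction
identity makes the contributions of cuts and joins match.

For three 2-cycles and `V` the trivial partition with one class, the formula gives
`64 (2n - 5)! n ^ (n - 6)`, and there are `n! / (48 (n - 6)!)` permutations of this type.
-/

namespace HurwitzNumber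

open Finset

section HurwitzBinomial

variable {ι R : Type*} [DecidableEq ι] [CommRing R]

/-- Hurwitz's generalization of the powers in the binomial theorem: `x (x + k_A) ^ (|A| - 1)`, where
`k_A` is the sum of the weights `k i` over `i ∈ A`. For empty `A` the expression is read as `1`. -/
noncomputable def hurwitzPoly (k : ι → R) (A : Finset ι) (x : R) : R :=
  if A = ∅ then 1 else x * (x + ∑ i ∈ A, k i) ^ (#A - 1)

theorem sum_powerset_sum_mem {M : Type*} [AddCommMonoid M] (K : Finset ι)
    (f : Finset ι → ι → M) :
    ∑ A ∈ K.powerset, ∑ j ∈ A, f A j =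
      ∑ j ∈ K, ∑ A ∈ (K.erase j).powerset, f (insert j A) j := by
  rw [sum_sigma', sum_sigma']
  refine sum_bij' (fun p _ ↦ ⟨p.2, p.1.erase p.2⟩) (fun p _ ↦ ⟨insert p.1 p.2, p.1⟩)
    ?_ ?_ ?_ ?_ ?_ <;> rintro ⟨a, b⟩ h <;> simp only [mem_sigma, mem_powerset] at h
  · exact mem_sigma.2 ⟨h.1 h.2, mem_powerset.2 (erase_subset_erase _ h.1)⟩
  · exact mem_sigma.2 ⟨mem_powerset.2 (insert_subset h.1 (h.2.trans (erase_subset _ _))),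
      mem_insert_self _ _⟩
  · simp [insert_erase h.2]
  · simp [erase_insert fun ha ↦ notMem_erase a K (h.2 ha)]
  · simp [insert_erase h.2]

theorem sdiff_insert_eq_erase_sdiff (K A : Finset ι) (j : ι) :
    K \ insert j A = K.erase j \ A := by
  rw [sdiff_insert, erase_sdiff_comm]

open Polynomial in
theorem derivative_hurwitzPoly (k : ι → R[X]) (hk : ∀ i, derivative (k i) = 0)
    {p : R[X]} (hp : derivative p = 1) (A : Finset ι) :
    derivative (hurwitzPoly k A p) = ∑ i ∈ A, hurwitzPoly k (A.erase i) (p + k i) := by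
  rcases A.eq_empty_or_nonempty with rfl | hA
  · simp [hurwitzPoly]
  obtain ⟨d, hd⟩ := Nat.exists_eq_add_of_le' hA.card_pos
  have hterm : ∀ i ∈ A, hurwitzPoly k (A.erase i) (p + k i) =
      if d = 0 then 1 else (p + k i) * (p + ∑ j ∈ A, k j) ^ (d - 1) := by
    intro i hi
    have hcard : #(A.erase i) = d := by rw [card_erase_of_mem hi, hd, Nat.add_sub_cancel]
    simp only [hurwitzPoly, ← card_eq_zero, hcard, ← add_sum_erase A k hi, add_assoc]
  rw [sum_congr rfl hterm, hurwitzPoly, if_neg hA.ne_empty, hd, Nat.add_sub_cancel]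
  rcases d with - | d
  · simp [hp, hd]
  · simp only [derivative_mul, derivative_pow, derivative_add, derivative_sum, hp, hk,
      Nat.add_sub_cancel, Nat.succ_ne_zero, if_false, ← sum_mul, sum_add_distrib, sum_const,
      nsmul_eq_mul, hd, map_natCast]
    push_cast
    ring

@[simp]
theorem hurwitzPoly_empty (k : ι → R) (x : R) : hurwitzPoly k ∅ x = 1 :=
  if_pos rfl

theorem hurwitzPoly_zero (k : ι → R) {A : Finset ι} (hA : A ≠ ∅) :
    hurwitzPoly k A 0 = 0 := by
  rw [hurwitzPoly, if_neg hA, zero_mul]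

open Polynomial in
theorem eval_hurwitzPoly (k : ι → R) (A : Finset ι) (p : R[X]) (a : R) :
    eval a (hurwitzPoly (C ∘ k) A p) = hurwitzPoly k A (eval a p) := by
  rw [hurwitzPoly, hurwitzPoly]
  split_ifs <;> simp [eval_finsetSum]

open Polynomial in
theorem hurwitzPoly_C (k : ι → R) (A : Finset ι) (y : R) :
    hurwitzPoly (C ∘ k) A (C y) = C (hurwitzPoly k A y) := by
  rw [hurwitzPoly, hurwitzPoly]
  split_ifs <;> simp

open Polynomial in
theorem derivative_sum_hurwitzPoly_mul (k : ι → R) (K : Finset ι) (a y : R) :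
    derivative (∑ A ∈ K.powerset,
      hurwitzPoly (C ∘ k) A (X + C a) * hurwitzPoly (C ∘ k) (K \ A) (C y)) =
    ∑ j ∈ K, ∑ A ∈ (K.erase j).powerset, hurwitzPoly (C ∘ k) A (X + C (a + k j)) *
      hurwitzPoly (C ∘ k) (K.erase j \ A) (C y) := by
  simp only [derivative_sum, derivative_mul, hurwitzPoly_C k _ y, derivative_C, mul_zero, add_zero,
    derivative_hurwitzPoly (C ∘ k) (fun i ↦ derivative_C) (p := X + C a) (by simp), sum_mul]
  rw [sum_powerset_sum_mem]
  refine sum_congr rfl fun j _ ↦ sum_congr rfl fun A hA ↦ ?_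
  rw [erase_insert fun h ↦ notMem_erase j K (mem_powerset.1 hA h), sdiff_insert_eq_erase_sdiff,
    Function.comp_apply, C_add, add_assoc]

open Polynomial in
theorem sum_hurwitzPoly_mul_X_add_C [IsAddTorsionFree R] (k : ι → R)
    (K : Finset ι) (a y : R) :
    ∑ A ∈ K.powerset, hurwitzPoly (C ∘ k) A (X + C a) * hurwitzPoly (C ∘ k) (K \ A) (C y) =
      hurwitzPoly (C ∘ k) K (X + C a + C y) := by
  induction hn : #K generalizing K a with
  | zero => simp [card_eq_zero.1 hn]
  | succ n ih =>
    set P := ∑ A ∈ K.powerset, hurwitzPoly (C ∘ k) A (X + C a) * hurwitzPoly (C ∘ k) (K \ A) (C y)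
    have hderiv : derivative (P - hurwitzPoly (C ∘ k) K (X + C a + C y)) = 0 := by
      rw [derivative_sub, derivative_sum_hurwitzPoly_mul, sub_eq_zero,
        derivative_hurwitzPoly (C ∘ k) (fun i ↦ derivative_C) (by simp)]
      refine sum_congr rfl fun j hj ↦ ?_
      rw [ih (K.erase j) (a + k j) (by rw [card_erase_of_mem hj, hn, Nat.add_sub_cancel]),
        C_add, ← add_assoc, add_right_comm, Function.comp_apply]
    have heval : eval (-a) (P - hurwitzPoly (C ∘ k) K (X + C a + C y)) = 0 := by
      simp only [P, eval_sub, eval_finsetSum, eval_mul, eval_hurwitzPoly, eval_add, eval_X, eval_C,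
        neg_add_cancel, zero_add]
      rw [sum_eq_single_of_mem ∅ (empty_mem_powerset K)
        (fun A _ hA ↦ by rw [hurwitzPoly_zero k hA, zero_mul]), hurwitzPoly_empty, one_mul,
        sdiff_empty, sub_self]
    rw [eq_C_of_derivative_eq_zero hderiv, eval_C] at heval
    rw [← sub_eq_zero, eq_C_of_derivative_eq_zero hderiv, heval, C_0]

/-- **Hurwitz's binomial theorem** -/
theorem sum_hurwitzPoly_mul_hurwitzPoly [IsAddTorsionFree R] (k : ι → R)
    (K : Finset ι) (x y : R) :
    ∑ A ∈ K.powerset, hurwitzPoly k A x * hurwitzPoly k (K \ A) y = hurwitzPoly k K (x + y) := by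
  have h := congrArg (Polynomial.eval x) (sum_hurwitzPoly_mul_X_add_C k K 0 y)
  simpa only [Polynomial.eval_finsetSum, Polynomial.eval_mul, eval_hurwitzPoly, Polynomial.eval_add,
    Polynomial.eval_X, Polynomial.eval_C, add_zero] using h

end HurwitzBinomial

theorem sum_mul_add_div {ι 𝕜 : Type*} [Field 𝕜] [LinearOrder 𝕜] [IsStrictOrderedRing 𝕜]
    {k : ι → 𝕜} {K : Finset ι} {x : 𝕜} (hk : ∀ i ∈ K, 0 < k i) (hx : 0 < x) (y : 𝕜) :
    ∑ i ∈ K, k i * (x + y + k i) / (x + k i) =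
      ∑ i ∈ K, k i + y * ∑ i ∈ K, k i / (x + k i) := by
  rw [mul_sum, ← sum_add_distrib]
  refine sum_congr rfl fun i hi ↦ ?_
  have := hk i hi
  field_simp
  ring

section TwoSidedSum

variable {ι : Type*} [DecidableEq ι]

theorem sum_powerset_sdiff_comm {M : Type*} [AddCommMonoid M] (K : Finset ι)
    (f : Finset ι → Finset ι → M) :
    ∑ A ∈ K.powerset, f A (K \ A) = ∑ A ∈ K.powerset, f (K \ A) A :=
  sum_bij' (fun A _ ↦ K \ A) (fun A _ ↦ K \ A) (by simp) (by simp)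
    (fun A hA ↦ Finset.sdiff_sdiff_eq_self (mem_powerset.1 hA))
    (fun A hA ↦ Finset.sdiff_sdiff_eq_self (mem_powerset.1 hA))
    (fun A hA ↦ by rw [Finset.sdiff_sdiff_eq_self (mem_powerset.1 hA)])

variable {𝕜 : Type*} [Field 𝕜]

theorem hurwitzPoly_eq_zpow (k : ι → 𝕜) (A : Finset ι) {x : 𝕜} (hx : x ≠ 0) :
    hurwitzPoly k A x = x * (x + ∑ i ∈ A, k i) ^ ((#A : ℤ) - 1) := by
  rcases A.eq_empty_or_nonempty with rfl | hA
  · simp [hx]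
  · rw [hurwitzPoly, if_neg hA.ne_empty, ← zpow_natCast, Nat.cast_pred hA.card_pos]

theorem hurwitzPoly_erase_eq_zpow (k : ι → 𝕜) {A : Finset ι} {x : 𝕜} {j : ι} (hj : j ∈ A)
    (hx : x + k j ≠ 0) :
    hurwitzPoly k (A.erase j) (x + k j) =
      (x + k j) * (x + ∑ i ∈ A, k i) ^ ((#A : ℤ) - 2) := by
  rw [hurwitzPoly_eq_zpow k _ hx, card_erase_of_mem hj, ← add_sum_erase A k hj, add_assoc,
    Nat.cast_pred (card_pos.2 ⟨j, hj⟩), sub_sub, one_add_one_eq_two]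

/-- The correction `h_A(x)` in the decomposition `(x + k_A) ^ (|A| - 2) = p_A(x) / x ^ 2 - h_A(x)`,
where `p_A` is `hurwitzPoly k A`. -/
noncomputable def hurwitzCorrection (k : ι → 𝕜) (A : Finset ι) (x : 𝕜) : 𝕜 :=
  ∑ j ∈ A, k j / (x * (x + k j)) * hurwitzPoly k (A.erase j) (x + k j)

theorem sum_hurwitzCorrection_mul (k : ι → 𝕜) (K : Finset ι) (x : 𝕜) (f : Finset ι → 𝕜) :
    ∑ A ∈ K.powerset, hurwitzCorrection k A x * f (K \ A) =
      ∑ j ∈ K, k j / (x * (x + k j)) *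
        ∑ A ∈ (K.erase j).powerset, hurwitzPoly k A (x + k j) * f (K.erase j \ A) := by
  simp only [hurwitzCorrection, sum_mul]
  rw [sum_powerset_sum_mem]
  refine sum_congr rfl fun j _ ↦ (sum_congr rfl fun A hA ↦ ?_).trans (mul_sum ..).symm
  rw [erase_insert fun h ↦ notMem_erase j K (mem_powerset.1 hA h), sdiff_insert_eq_erase_sdiff,
    mul_assoc]

variable [LinearOrder 𝕜] [IsStrictOrderedRing 𝕜] {k : ι → 𝕜} {K : Finset ι} {x y : 𝕜}

theorem zpow_card_sub_two_eq (hk : ∀ i ∈ K, 0 < k i) (hx : 0 < x) :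
    (x + ∑ i ∈ K, k i) ^ ((#K : ℤ) - 2) =
      hurwitzPoly k K x / x ^ 2 - hurwitzCorrection k K x := by
  have hN : x + ∑ i ∈ K, k i ≠ 0 :=
    (add_pos_of_pos_of_nonneg hx (sum_nonneg fun i hi ↦ (hk i hi).le)).ne'
  have hcorr : hurwitzCorrection k K x =
      (x + ∑ i ∈ K, k i) ^ ((#K : ℤ) - 2) * (∑ i ∈ K, k i) / x := by
    rw [hurwitzCorrection, mul_sum, sum_div]
    refine sum_congr rfl fun j hj ↦ ?_
    have hxj : x + k j ≠ 0 := (add_pos hx (hk j hj)).ne'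
    rw [hurwitzPoly_erase_eq_zpow k hj hxj]
    field_simp
  rw [hcorr, hurwitzPoly_eq_zpow k K hx.ne', show (#K : ℤ) - 1 = #K - 2 + 1 by ring,
    zpow_add_one₀ hN]
  field_simp
  ring

theorem sum_hurwitzCorrection_mul_hurwitzPoly (hk : ∀ i ∈ K, 0 < k i) (hx : 0 < x) (hy : 0 < y) :
    ∑ A ∈ K.powerset, hurwitzCorrection k A x * hurwitzPoly k (K \ A) y =
      (x + y + ∑ i ∈ K, k i) ^ ((#K : ℤ) - 2) / x *
        ∑ j ∈ K, k j * (x + y + k j) / (x + k j) := by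
  rw [sum_hurwitzCorrection_mul k K x fun B ↦ hurwitzPoly k B y, mul_sum]
  refine sum_congr rfl fun j hj ↦ ?_
  have hkj := hk j hj
  rw [sum_hurwitzPoly_mul_hurwitzPoly, add_right_comm,
    hurwitzPoly_erase_eq_zpow k hj (by positivity)]
  field_simp

theorem sum_hurwitzPoly_mul_hurwitzCorrection (hk : ∀ i ∈ K, 0 < k i) (hx : 0 < x) (hy : 0 < y) :
    ∑ A ∈ K.powerset, hurwitzPoly k A x * hurwitzCorrection k (K \ A) y =
      (x + y + ∑ i ∈ K, k i) ^ ((#K : ℤ) - 2) / y *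
        ∑ j ∈ K, k j * (x + y + k j) / (y + k j) := by
  rw [sum_powerset_sdiff_comm K fun A B ↦ hurwitzPoly k A x * hurwitzCorrection k B y, add_comm x y,
    ← sum_hurwitzCorrection_mul_hurwitzPoly hk hy hx]
  exact sum_congr rfl fun A _ ↦ mul_comm _ _

theorem sum_hurwitzCorrection_mul_hurwitzCorrection (hk : ∀ i ∈ K, 0 < k i) (hx : 0 < x)
    (hy : 0 < y) :
    ∑ A ∈ K.powerset, hurwitzCorrection k A x * hurwitzCorrection k (K \ A) y =
      (x + y + ∑ i ∈ K, k i) ^ ((#K : ℤ) - 3) / (x * y) *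
        ∑ j ∈ K, k j * (∑ i ∈ K, k i - k j) * (1 / (x + k j) + 1 / (y + k j)) := by
  have hinner : ∀ j ∈ K, k j / (x * (x + k j)) * ∑ A ∈ (K.erase j).powerset,
        hurwitzPoly k A (x + k j) * hurwitzCorrection k (K.erase j \ A) y =
      (x + y + ∑ i ∈ K, k i) ^ ((#K : ℤ) - 3) / (x * y) *
        (k j * (∑ i ∈ K, k i - k j) / (x + k j) +
          (k j * ∑ i ∈ K, k i / (y + k i) - k j * (k j / (y + k j)))) := by
    intro j hj
    have hkj := hk j hj
    have hk' : ∀ i ∈ K.erase j, 0 < k i := fun i hi ↦ hk i (mem_of_mem_erase hi)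
    rw [sum_hurwitzPoly_mul_hurwitzCorrection hk' (by positivity) hy, add_comm (x + k j) y,
      sum_mul_add_div hk' hy, add_comm y (x + k j), sum_erase_eq_sub hj,
      sum_erase_eq_sub hj, card_erase_of_mem hj, Nat.cast_pred (card_pos.2 ⟨j, hj⟩),
      show x + k j + y + (∑ i ∈ K, k i - k j) = x + y + ∑ i ∈ K, k i by ring,
      show (#K : ℤ) - 1 - 2 = #K - 3 by ring]
    field_simp
  have hsum : ∑ j ∈ K, k j * ∑ i ∈ K, k i / (y + k i) =
      ∑ j ∈ K, (∑ i ∈ K, k i) * (k j / (y + k j)) := by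
    rw [← sum_mul, ← mul_sum]
  rw [sum_hurwitzCorrection_mul k K x fun B ↦ hurwitzCorrection k B y, sum_congr rfl hinner,
    ← mul_sum, sum_add_distrib, sum_sub_distrib, hsum, ← sum_sub_distrib, ← sum_add_distrib]
  congr 1
  exact sum_congr rfl fun j _ ↦ by ring

theorem sum_zpow_card_sub_two_mul_zpow_card_sub_two (hk : ∀ i ∈ K, 0 < k i) (hx : 0 < x)
    (hy : 0 < y) :
    ∑ A ∈ K.powerset, (x + ∑ i ∈ A, k i) ^ ((#A : ℤ) - 2) *
        (y + ∑ i ∈ K \ A, k i) ^ ((#(K \ A) : ℤ) - 2) =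
      (x + y + ∑ i ∈ K, k i) ^ ((#K : ℤ) - 3) / (x * y) *
        ((x + y + ∑ i ∈ K, k i) * (x + y) ^ 2 / (x * y) -
          ∑ j ∈ K, k j * (x + y + k j) * (1 / (x + k j) + 1 / (y + k j))) := by
  have hexpand : ∀ A ∈ K.powerset, (x + ∑ i ∈ A, k i) ^ ((#A : ℤ) - 2) *
        (y + ∑ i ∈ K \ A, k i) ^ ((#(K \ A) : ℤ) - 2) =
      hurwitzPoly k A x * hurwitzPoly k (K \ A) y / (x ^ 2 * y ^ 2) -
        hurwitzCorrection k A x * hurwitzPoly k (K \ A) y / y ^ 2 -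
        hurwitzPoly k A x * hurwitzCorrection k (K \ A) y / x ^ 2 +
        hurwitzCorrection k A x * hurwitzCorrection k (K \ A) y := by
    intro A hA
    rw [zpow_card_sub_two_eq (fun i hi ↦ hk i (mem_powerset.1 hA hi)) hx,
      zpow_card_sub_two_eq (fun i hi ↦ hk i (sdiff_subset hi)) hy]
    ring
  rw [sum_congr rfl hexpand, sum_add_distrib, sum_sub_distrib, sum_sub_distrib, ← sum_div,
    ← sum_div, ← sum_div, sum_hurwitzPoly_mul_hurwitzPoly, hurwitzPoly_eq_zpow k K (by positivity),
    sum_hurwitzCorrection_mul_hurwitzPoly hk hx hy, sum_hurwitzPoly_mul_hurwitzCorrection hk hx hy,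
    sum_hurwitzCorrection_mul_hurwitzCorrection hk hx hy]
  set κ := ∑ i ∈ K, k i
  set α := ∑ j ∈ K, k j / (x + k j) with hα
  set β := ∑ j ∈ K, k j / (y + k j) with hβ
  have hN : x + y + κ ≠ 0 := by
    have : 0 ≤ κ := sum_nonneg fun i hi ↦ (hk i hi).le
    positivity
  have hD : ∑ j ∈ K, k j * (x + y + k j) / (x + k j) = κ + y * α := sum_mul_add_div hk hx y
  have hE : ∑ j ∈ K, k j * (x + y + k j) / (y + k j) = κ + x * β := by
    rw [add_comm x y]
    exact sum_mul_add_div hk hy x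
  have hDE : ∑ j ∈ K, k j * (x + y + k j) * (1 / (x + k j) + 1 / (y + k j)) =
      (κ + y * α) + (κ + x * β) := by
    rw [← hD, ← hE, ← sum_add_distrib]
    exact sum_congr rfl fun j _ ↦ by ring
  have hH : ∑ j ∈ K, k j * (κ - k j) * (1 / (x + k j) + 1 / (y + k j)) =
      (x + y + κ) * (α + β) - ((κ + y * α) + (κ + x * β)) := by
    rw [← hDE, hα, hβ, ← sum_add_distrib, mul_sum, ← sum_sub_distrib]
    exact sum_congr rfl fun j _ ↦ by ring
  rw [hD, hE, hDE, hH, show (#K : ℤ) - 1 = #K - 3 + 1 + 1 by ring,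
    show (#K : ℤ) - 2 = #K - 3 + 1 by ring, zpow_add_one₀ hN, zpow_add_one₀ hN]
  field_simp
  ring

end TwoSidedSum

section PartialFractions

variable {𝕜 : Type*} [Field 𝕜]

theorem prod_erase_range_sub_natCast {i d : ℕ} (h : i ≤ d) :
    ∏ j ∈ (range (d + 1)).erase i, ((j : 𝕜) - i) =
      (-1) ^ i * i.factorial * (d - i).factorial := by
  induction d, h using Nat.le_induction with
  | base =>
    have hterm : ∀ j ∈ range i, (j : 𝕜) - i = -((i - 1 - j : ℕ) + 1 : ℕ) := by
      intro j hj
      have hj := mem_range.1 hj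
      rw [show i - 1 - j + 1 = i - j by lia, Nat.cast_sub hj.le, neg_sub]
    rw [range_add_one, erase_insert notMem_range_self, prod_congr rfl hterm, prod_neg, card_range,
      prod_range_reflect (fun j ↦ ((j + 1 : ℕ) : 𝕜)), ← Nat.cast_prod,
      prod_range_add_one_eq_factorial]
    simp
  | succ d hd ih =>
    rw [range_add_one, erase_insert_of_ne (by lia), prod_insert (by simp), ih,
      show d + 1 - i = d - i + 1 by lia, Nat.factorial_succ]
    push_cast [Nat.cast_sub hd]
    ring

theorem pow_div_prod_range_add [CharZero 𝕜] (d : ℕ) {q : 𝕜} (hq : ∀ t ∈ range (d + 1), q + t ≠ 0) :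
    q ^ d / ∏ t ∈ range (d + 1), (q + t) =
      ∑ r ∈ range (d + 1),
        (-1) ^ (d - r) * (r : 𝕜) ^ d / (r.factorial * (d - r).factorial) / (q + r) := by
  have hinj : Set.InjOn (fun i : ℕ ↦ -(i : 𝕜)) (range (d + 1)) := fun a _ b _ h ↦ by simpa using h
  have hinterp := congrArg (Polynomial.eval q) <|
    Lagrange.eq_interpolate_of_eval_eq (s := range (d + 1)) (r := fun i ↦ (-(i : 𝕜)) ^ d)
      (f := Polynomial.X ^ d) hinj
      (by rw [Polynomial.degree_X_pow, card_range]; exact_mod_cast d.lt_succ_self) (by simp)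
  rw [Lagrange.eval_interpolate_not_at_node _ fun i hi h ↦ hq i hi (by rw [h, neg_add_cancel])]
    at hinterp
  simp only [Polynomial.eval_pow, Polynomial.eval_X, Lagrange.eval_nodal, sub_neg_eq_add] at hinterp
  rw [hinterp, mul_div_cancel_left₀ _ (prod_ne_zero_iff.2 hq)]
  refine sum_congr rfl fun r hr ↦ ?_
  have hrd : r ≤ d := Nat.lt_succ_iff.1 (mem_range.1 hr)
  have hweight : Lagrange.nodalWeight (range (d + 1)) (fun i : ℕ ↦ -(i : 𝕜)) r =
      ((-1) ^ r * r.factorial * (d - r).factorial : 𝕜)⁻¹ := by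
    rw [← prod_erase_range_sub_natCast hrd, Lagrange.nodalWeight, prod_inv_distrib]
    simp only [sub_neg_eq_add, neg_add_eq_sub]
  have hpow : (-(r : 𝕜)) ^ d = (-1) ^ r * ((-1) ^ (d - r) * (r : 𝕜) ^ d) := by
    rw [← mul_assoc, ← pow_add, Nat.add_sub_cancel' hrd, neg_pow]
  have hsign : (-1 : 𝕜) ^ r ≠ 0 := pow_ne_zero _ (by norm_num)
  rw [hweight, hpow]
  field_simp

end PartialFractions

section PowWeight

/-- The weight `u_k = k ^ k / k!`; it satisfies the convolution identities behind the cut-and-join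
recurrence. -/
def powWeight (k : ℕ) : ℚ := k ^ k / k.factorial

/-- The weight `a_k = k u_k = k ^ (k + 1) / k!` of a cycle of length `k` in Hurwitz's formula. -/
def cycleWeight (k : ℕ) : ℚ := k * powWeight k

theorem powWeight_pos (k : ℕ) : 0 < powWeight k := by
  rw [powWeight]
  rcases k.eq_zero_or_pos with rfl | hk
  · simp
  · positivity

theorem cycleWeight_pos {k : ℕ} (hk : 0 < k) : 0 < cycleWeight k :=
  mul_pos (Nat.cast_pos.2 hk) (powWeight_pos k)

theorem powWeight_eq_pow_pred_div {k : ℕ} (hk : 0 < k) :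
    powWeight k = (k : ℚ) ^ (k - 1) / (k - 1).factorial := by
  obtain ⟨m, rfl⟩ := Nat.exists_eq_add_of_le' hk
  rw [powWeight, Nat.factorial_succ, Nat.add_sub_cancel, pow_succ']
  push_cast
  field_simp

theorem mul_choose_div_factorial {i d : ℕ} (h : i ≤ d) (z : ℚ) :
    z * d.choose i / d.factorial = z / (i.factorial * (d - i).factorial) := by
  rw [Nat.cast_choose ℚ h]
  field_simp

theorem sum_powWeight_mul_powWeight_div (p : ℕ) {q : ℚ} (hq : 0 < q) :
    ∑ r ∈ range p, powWeight r * powWeight (p - r) / (q + r) =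
      ∑ i ∈ range p, (p : ℚ) ^ i / i.factorial *
        (q ^ (p - 1 - i) / ∏ t ∈ range (p - 1 - i + 1), (q + t)) := by
  simp_rw [pow_div_prod_range_add (q := q) _ fun t _ ↦ by positivity, mul_sum]
  rw [sum_comm' (t' := range p) (s' := fun r ↦ range (p - r))
    fun i r ↦ by simp only [mem_range]; lia]
  refine sum_congr rfl fun r hr ↦ ?_
  have hr := mem_range.1 hr
  rw [powWeight_eq_pow_pred_div (Nat.sub_pos_of_lt hr), Nat.cast_sub hr.le, sub_eq_add_neg, add_pow,
    powWeight, sum_div, mul_sum, sum_div, Nat.sub_add_cancel (Nat.sub_pos_of_lt hr)]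
  refine sum_congr rfl fun i hi ↦ ?_
  have hi := mem_range.1 hi
  rw [mul_choose_div_factorial (Nat.le_sub_one_of_lt hi), Nat.sub_right_comm p 1 i,
    show p - i - 1 - r = p - r - 1 - i by lia, show p - i - 1 = r + (p - r - 1 - i) by lia,
    pow_add, neg_pow (r : ℚ)]
  field_simp

theorem prod_range_natCast_add_mul_factorial {q : ℕ} (hq : 0 < q) (d : ℕ) :
    (∏ t ∈ range (d + 1), ((q : ℚ) + t)) * (q - 1).factorial = (q + d).factorial := by
  have h := Nat.factorial_mul_ascFactorial (q - 1) (d + 1)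
  rw [Nat.ascFactorial_eq_prod_range, Nat.sub_add_cancel hq,
    show q - 1 + (d + 1) = q + d by lia, mul_comm] at h
  exact_mod_cast h

theorem cycleWeight_mul_sum_div (p : ℕ) {q : ℕ} (hq : 0 < q) :
    cycleWeight q * ∑ r ∈ range p, powWeight r * powWeight (p - r) / ((q : ℚ) + r) =
      ∑ i ∈ range p, (p : ℚ) ^ i * (q : ℚ) ^ (p + q - 1 - i) /
        (i.factorial * (p + q - 1 - i).factorial) := by
  rw [sum_powWeight_mul_powWeight_div p (Nat.cast_pos.2 hq), mul_sum]
  refine sum_congr rfl fun i hi ↦ ?_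
  have hi := mem_range.1 hi
  have hprod : ∏ t ∈ range (p - 1 - i + 1), ((q : ℚ) + t) ≠ 0 :=
    prod_ne_zero_iff.2 fun t _ ↦ by positivity
  rw [show p + q - 1 - i = q + (p - 1 - i) by lia, ← prod_range_natCast_add_mul_factorial hq,
    cycleWeight, powWeight, ← Nat.mul_factorial_pred hq.ne', pow_add]
  push_cast
  field_simp

theorem sum_div_add_sum_div_eq_powWeight {p q : ℕ} (hp : 0 < p) (hq : 0 < q) :
    cycleWeight q * ∑ r ∈ range p, powWeight r * powWeight (p - r) / ((q : ℚ) + r) +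
      cycleWeight p * ∑ r ∈ range q, powWeight r * powWeight (q - r) / ((p : ℚ) + r) =
        powWeight (p + q) := by
  have hreflect : ∑ i ∈ range q, (q : ℚ) ^ i * (p : ℚ) ^ (q + p - 1 - i) /
        (i.factorial * (q + p - 1 - i).factorial) =
      ∑ i ∈ range q, (p : ℚ) ^ (p + i) * (q : ℚ) ^ (p + q - 1 - (p + i)) /
        ((p + i).factorial * (p + q - 1 - (p + i)).factorial) := by
    rw [← sum_range_reflect]
    refine sum_congr rfl fun i hi ↦ ?_
    have hi := mem_range.1 hi
    rw [show p + q - 1 - (p + i) = q - 1 - i by lia, show q + p - 1 - (q - 1 - i) = p + i by lia]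
    ring
  rw [cycleWeight_mul_sum_div p hq, cycleWeight_mul_sum_div q hp, hreflect,
    ← sum_range_add (fun i ↦ (p : ℚ) ^ i * (q : ℚ) ^ (p + q - 1 - i) /
      (i.factorial * (p + q - 1 - i).factorial)),
    powWeight_eq_pow_pred_div (Nat.add_pos_left hp q), Nat.cast_add, add_pow, sum_div,
    Nat.sub_add_cancel (Nat.add_pos_left hp q)]
  refine sum_congr rfl fun i hi ↦ ?_
  rw [mul_choose_div_factorial (Nat.le_sub_one_of_lt (mem_range.1 hi))]

theorem powWeight_succ_div_succ (m : ℕ) :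
    powWeight (m + 1) / (m + 1 : ℕ) = (1 + (m : ℚ)) ^ ((m : ℤ) - 1) / m.factorial := by
  have hm : (1 + m : ℚ) ≠ 0 := by positivity
  rw [powWeight_eq_pow_pred_div m.succ_pos, Nat.succ_sub_one, zpow_sub_one₀ hm, zpow_natCast,
    Nat.cast_succ, add_comm (m : ℚ)]
  ring

/-- **Abel's identity** -/
theorem sum_choose_mul_zpow_mul_zpow (d : ℕ) :
    ∑ m ∈ range (d + 1), (d.choose m : ℚ) *
        ((1 + (m : ℚ)) ^ ((m : ℤ) - 1) * (1 + ((d - m : ℕ) : ℚ)) ^ (((d - m : ℕ) : ℤ) - 1)) =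
      2 * (2 + (d : ℚ)) ^ ((d : ℤ) - 1) := by
  have h := sum_hurwitzPoly_mul_hurwitzPoly (fun _ : Fin d ↦ (1 : ℚ)) univ 1 1
  have hpoly : ∀ (A : Finset (Fin d)) {x : ℚ}, x ≠ 0 →
      hurwitzPoly (fun _ ↦ 1) A x = x * (x + #A) ^ ((#A : ℤ) - 1) := fun A x hx ↦ by
    rw [hurwitzPoly_eq_zpow _ A hx, sum_const, nsmul_one]
  simp only [hpoly _ one_ne_zero, one_mul, card_sdiff_of_subset (subset_univ _), card_univ,
    Fintype.card_fin, sum_powerset_apply_card fun m ↦ (1 + (m : ℚ)) ^ ((m : ℤ) - 1) *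
      (1 + ((d - m : ℕ) : ℚ)) ^ (((d - m : ℕ) : ℤ) - 1), nsmul_eq_mul] at h
  rw [h, one_add_one_eq_two, hpoly _ two_ne_zero, card_univ, Fintype.card_fin]

theorem pow_three_mul_sum_powWeight_div_mul {p : ℕ} (hp : 0 < p) :
    (p : ℚ) ^ 3 * ∑ r ∈ Ico 1 p, (powWeight r / r) * (powWeight (p - r) / (p - r : ℕ)) =
      2 * ((p : ℚ) - 1) * cycleWeight p := by
  obtain rfl | h1p := eq_or_ne p 1
  · simp
  obtain ⟨d, rfl⟩ := Nat.exists_eq_add_of_le' (show 2 ≤ p by lia)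
  have hterm : ∀ m ∈ range (d + 1), (powWeight (1 + m) / (1 + m : ℕ)) *
        (powWeight (d + 2 - (1 + m)) / (d + 2 - (1 + m) : ℕ)) =
      (d.choose m : ℚ) * ((1 + (m : ℚ)) ^ ((m : ℤ) - 1) *
        (1 + ((d - m : ℕ) : ℚ)) ^ (((d - m : ℕ) : ℤ) - 1)) / d.factorial := by
    intro m hm
    have hm : m ≤ d := Nat.lt_succ_iff.1 (mem_range.1 hm)
    rw [show d + 2 - (1 + m) = d - m + 1 by lia, add_comm 1 m, powWeight_succ_div_succ,
      powWeight_succ_div_succ, mul_comm (d.choose m : ℚ), mul_choose_div_factorial hm]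
    ring
  have hd : (2 + d : ℚ) ≠ 0 := by positivity
  rw [sum_Ico_eq_sum_range, show d + 2 - 1 = d + 1 by lia, sum_congr rfl hterm, ← sum_div,
    sum_choose_mul_zpow_mul_zpow, cycleWeight, powWeight_eq_pow_pred_div hp,
    show d + 2 - 1 = d + 1 by lia, zpow_sub_one₀ hd, zpow_natCast, Nat.factorial_succ]
  push_cast
  rw [add_comm (d : ℚ) 2]
  field_simp
  ring

/-- The sum `Y(p, q) = ∑ u_r u_{p - r} / (q + r)` over the proper splittings of `p`, which records
the interaction of a cut cycle of length `p` with another cycle of length `q`. -/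
def cutInteraction (p q : ℕ) : ℚ :=
  ∑ r ∈ Ico 1 p, powWeight r * powWeight (p - r) / ((q : ℚ) + r)

theorem cycleWeight_mul_sum_range_eq {p q : ℕ} (hp : 0 < p) (hq : 0 < q) :
    cycleWeight q * ∑ r ∈ range p, powWeight r * powWeight (p - r) / ((q : ℚ) + r) =
      powWeight p * powWeight q + cycleWeight q * cutInteraction p q := by
  have hzero : powWeight 0 = 1 := by simp [powWeight]
  rw [range_eq_Ico, sum_eq_sum_Ico_succ_bot hp, mul_add, cutInteraction, cycleWeight, hzero,
    Nat.cast_zero, add_zero, Nat.sub_zero, one_mul]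
  field_simp

theorem cycleWeight_mul_cutInteraction_add {p q : ℕ} (hp : 0 < p) (hq : 0 < q) :
    cycleWeight q * cutInteraction p q + cycleWeight p * cutInteraction q p =
      powWeight (p + q) - 2 * (powWeight p * powWeight q) := by
  linear_combination sum_div_add_sum_div_eq_powWeight hp hq -
    cycleWeight_mul_sum_range_eq hp hq - cycleWeight_mul_sum_range_eq hq hp

theorem sum_powWeight_mul_inv_add_inv (p q : ℕ) :
    ∑ r ∈ Ico 1 p, powWeight r * powWeight (p - r) *
        (1 / ((r : ℚ) + q) + 1 / (((p - r : ℕ) : ℚ) + q)) = 2 * cutInteraction p q := by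
  have hreflect : ∑ r ∈ Ico 1 p, powWeight r * powWeight (p - r) / (q + (p - r : ℕ)) =
      cutInteraction p q := by
    refine sum_bij' (fun r _ ↦ p - r) (fun r _ ↦ p - r) ?_ ?_ ?_ ?_ ?_ <;> intro r hr <;>
      simp only [mem_Ico] at hr ⊢
    iterate 4 lia
    rw [show p - (p - r) = r by lia, mul_comm (powWeight r)]
  rw [two_mul]
  nth_rw 2 [← hreflect]
  rw [cutInteraction, ← sum_add_distrib]
  exact sum_congr rfl fun r _ ↦ by ring

end PowWeight

section CutAndJoinIdentity

variable {ι : Type*} [DecidableEq ι]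

/-- The right-hand side `n ^ (ℓ - 3) ∏ a_{k_i}`, `n = ∑ k_i`, of Hurwitz's formula for a transitive
factorization of a permutation with `ℓ` cycles, of lengths `k i` for `i ∈ C`. -/
def hurwitzWeight (k : ι → ℕ) (C : Finset ι) : ℚ :=
  (∑ i ∈ C, (k i : ℚ)) ^ ((#C : ℤ) - 3) * ∏ i ∈ C, cycleWeight (k i)

/-- The total Hurwitz weight of the ways to distribute cycles of lengths `k i`, `i ∈ K`, among two
blocks that already contain a cycle of length `r` and of length `s` respectively. -/
def splitWeight (k : ι → ℕ) (K : Finset ι) (r s : ℕ) : ℚ :=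
  ∑ A ∈ K.powerset,
    ((r + ∑ i ∈ A, (k i : ℚ)) ^ ((#A : ℤ) - 2) * (cycleWeight r * ∏ i ∈ A, cycleWeight (k i))) *
      ((s + ∑ i ∈ K \ A, (k i : ℚ)) ^ ((#(K \ A) : ℤ) - 2) *
        (cycleWeight s * ∏ i ∈ K \ A, cycleWeight (k i)))

theorem sum_cut_eq {k : ι → ℕ} {K : Finset ι} (hk : ∀ i ∈ K, 0 < k i) {p r : ℕ}
    (hr : r ∈ Ico 1 p) :
    cycleWeight r * cycleWeight (p - r) * ∑ A ∈ K.powerset,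
        (r + ∑ i ∈ A, (k i : ℚ)) ^ ((#A : ℤ) - 2) *
          ((p - r : ℕ) + ∑ i ∈ K \ A, (k i : ℚ)) ^ ((#(K \ A) : ℤ) - 2) =
      (p + ∑ i ∈ K, (k i : ℚ)) ^ ((#K : ℤ) - 3) *
        ((p + ∑ i ∈ K, (k i : ℚ)) * (p : ℚ) ^ 2 *
            (powWeight r / r * (powWeight (p - r) / (p - r : ℕ))) -
          ∑ j ∈ K, (k j : ℚ) * (p + k j) * (powWeight r * powWeight (p - r) *
            (1 / ((r : ℚ) + k j) + 1 / (((p - r : ℕ) : ℚ) + k j)))) := by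
  obtain ⟨hr1, hrp⟩ := mem_Ico.1 hr
  have hr0 : (0 : ℚ) < r := Nat.cast_pos.2 hr1
  have hpr0 : (0 : ℚ) < (p - r : ℕ) := Nat.cast_pos.2 (Nat.sub_pos_of_lt hrp)
  have hadd : (r : ℚ) + (p - r : ℕ) = p := by rw [← Nat.cast_add, Nat.add_sub_cancel' hrp.le]
  have hpull : ∑ j ∈ K, (k j : ℚ) * (p + k j) * (powWeight r * powWeight (p - r) *
        (1 / ((r : ℚ) + k j) + 1 / (((p - r : ℕ) : ℚ) + k j))) =
      powWeight r * powWeight (p - r) * ∑ j ∈ K, (k j : ℚ) * (p + k j) *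
        (1 / ((r : ℚ) + k j) + 1 / (((p - r : ℕ) : ℚ) + k j)) := by
    rw [mul_sum]
    exact sum_congr rfl fun j _ ↦ by ring
  rw [sum_zpow_card_sub_two_mul_zpow_card_sub_two (fun i hi ↦ Nat.cast_pos.2 (hk i hi)) hr0 hpr0,
    hadd, hpull, cycleWeight, cycleWeight]
  field_simp

theorem mul_sum_splitWeight {k : ι → ℕ} {K : Finset ι} (hk : ∀ i ∈ K, 0 < k i) {p : ℕ}
    (hp : 0 < p) :
    p * ∑ r ∈ Ico 1 p, splitWeight k K r (p - r) =
      (p + ∑ i ∈ K, (k i : ℚ)) ^ ((#K : ℤ) - 3) * (∏ i ∈ K, cycleWeight (k i)) *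
        (2 * (p + ∑ i ∈ K, (k i : ℚ)) * ((p - 1) * cycleWeight p) -
          2 * ∑ j ∈ K, p * k j * (p + k j) * cutInteraction p (k j)) := by
  have hfactor : ∀ r, ∀ A ∈ K.powerset,
      ((r + ∑ i ∈ A, (k i : ℚ)) ^ ((#A : ℤ) - 2) *
          (cycleWeight r * ∏ i ∈ A, cycleWeight (k i))) *
        (((p - r : ℕ) + ∑ i ∈ K \ A, (k i : ℚ)) ^ ((#(K \ A) : ℤ) - 2) *
          (cycleWeight (p - r) * ∏ i ∈ K \ A, cycleWeight (k i))) =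
      (∏ i ∈ K, cycleWeight (k i)) * (cycleWeight r * cycleWeight (p - r) *
        (((r : ℚ) + ∑ i ∈ A, (k i : ℚ)) ^ ((#A : ℤ) - 2) *
          ((p - r : ℕ) + ∑ i ∈ K \ A, (k i : ℚ)) ^ ((#(K \ A) : ℤ) - 2))) := fun r A hA ↦ by
    rw [← prod_sdiff (mem_powerset.1 hA)]
    ring
  simp only [splitWeight, sum_congr rfl (hfactor _), ← mul_sum]
  rw [sum_congr rfl fun r hr ↦ sum_cut_eq hk hr, ← mul_sum, sum_sub_distrib, ← mul_sum, sum_comm,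
    sum_congr rfl fun j _ ↦ (mul_sum ..).symm]
  simp only [sum_powWeight_mul_inv_add_inv]
  have habel := pow_three_mul_sum_powWeight_div_mul hp
  have hpull : p * ∑ j ∈ K, (k j : ℚ) * (p + k j) * (2 * cutInteraction p (k j)) =
      2 * ∑ j ∈ K, p * k j * (p + k j) * cutInteraction p (k j) := by
    rw [mul_sum, mul_sum]
    exact sum_congr rfl fun j _ ↦ by ring
  rw [← hpull]
  linear_combination (p + ∑ i ∈ K, (k i : ℚ)) ^ ((#K : ℤ) - 3) *
    (∏ i ∈ K, cycleWeight (k i)) * (p + ∑ i ∈ K, (k i : ℚ)) * habel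

/-- The normalized contribution to the cut-and-join recurrence of an ordered pair of cycles of
lengths `p` and `q`: joining the two, and cutting the first in the presence of the second. -/
def pairInteraction (p q : ℕ) : ℚ :=
  p * q * cycleWeight (p + q) / (cycleWeight p * cycleWeight q) -
    2 * (p * q * (p + q) * cutInteraction p q) / cycleWeight p

theorem pairInteraction_add_comm {p q : ℕ} (hp : 0 < p) (hq : 0 < q) :
    pairInteraction p q + pairInteraction q p = 4 * (p + q) := by
  have h := cycleWeight_mul_cutInteraction_add hp hq
  have hup := powWeight_pos p
  have huq := powWeight_pos q
  have hap := cycleWeight_pos hp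
  have haq := cycleWeight_pos hq
  have hcollect : pairInteraction p q + pairInteraction q p =
      2 * (p * q * (p + q)) / (cycleWeight p * cycleWeight q) * (powWeight (p + q) -
        (cycleWeight q * cutInteraction p q + cycleWeight p * cutInteraction q p)) := by
    rw [pairInteraction, pairInteraction, Nat.add_comm q p, cycleWeight.eq_1 (p + q), Nat.cast_add]
    field_simp
    ring
  rw [hcollect, h, cycleWeight, cycleWeight]
  field_simp
  ring

theorem sum_sum_erase_comm {M : Type*} [AddCommMonoid M] (C : Finset ι) (f : ι → ι → M) :
    ∑ i ∈ C, ∑ j ∈ C.erase i, f i j = ∑ i ∈ C, ∑ j ∈ C.erase i, f j i :=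
  sum_comm' fun i j ↦ by simp only [mem_erase]; tauto

theorem sum_sum_erase_add (k : ι → ℕ) {C : Finset ι} (hC : C.Nonempty) :
    ∑ i ∈ C, ∑ j ∈ C.erase i, ((k i : ℚ) + k j) = 2 * ((#C - 1) * ∑ i ∈ C, (k i : ℚ)) := by
  have hleft : ∑ i ∈ C, ∑ _j ∈ C.erase i, (k i : ℚ) = (#C - 1) * ∑ i ∈ C, (k i : ℚ) := by
    rw [mul_sum]
    refine sum_congr rfl fun i hi ↦ ?_
    rw [sum_const, card_erase_of_mem hi, nsmul_eq_mul, Nat.cast_pred hC.card_pos]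
  simp only [sum_add_distrib]
  rw [sum_sum_erase_comm C fun _ j ↦ (k j : ℚ), hleft, two_mul]

theorem sum_pairInteraction {k : ι → ℕ} {C : Finset ι} (hk : ∀ i ∈ C, 0 < k i) (hC : C.Nonempty) :
    ∑ i ∈ C, ∑ j ∈ C.erase i, pairInteraction (k i) (k j) =
      4 * ((#C - 1) * ∑ i ∈ C, (k i : ℚ)) := by
  have hdouble : ∑ i ∈ C, ∑ j ∈ C.erase i,
      (pairInteraction (k i) (k j) + pairInteraction (k j) (k i)) =
        4 * ∑ i ∈ C, ∑ j ∈ C.erase i, ((k i : ℚ) + k j) := by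
    simp only [mul_sum]
    exact sum_congr rfl fun i hi ↦ sum_congr rfl fun j hj ↦
      pairInteraction_add_comm (hk i hi) (hk j (mem_of_mem_erase hj))
  rw [sum_sum_erase_add k hC] at hdouble
  simp only [sum_add_distrib] at hdouble
  rw [sum_sum_erase_comm C fun i j ↦ pairInteraction (k j) (k i)] at hdouble
  linarith

/-- The total Hurwitz weight of the ways to join two of the cycles. -/
def joinWeight (k : ι → ℕ) (C : Finset ι) : ℚ :=
  ∑ i ∈ C, ∑ j ∈ C.erase i, (k i : ℚ) * k j * ((∑ i ∈ C, (k i : ℚ)) ^ ((#C : ℤ) - 4) *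
    (cycleWeight (k i + k j) * ∏ l ∈ (C.erase i).erase j, cycleWeight (k l)))

theorem sum_splitWeight_add_joinWeight {k : ι → ℕ} {C : Finset ι} (hk : ∀ i ∈ C, 0 < k i)
    (hC : C.Nonempty) :
    ∑ i ∈ C, (k i : ℚ) * ∑ r ∈ Ico 1 (k i), splitWeight k (C.erase i) r (k i - r) + joinWeight k C =
      2 * (∑ i ∈ C, (k i : ℚ) + #C - 2) * hurwitzWeight k C := by
  have ha : ∀ i ∈ C, cycleWeight (k i) ≠ 0 := fun i hi ↦ (cycleWeight_pos (hk i hi)).ne'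
  set n := ∑ i ∈ C, (k i : ℚ) with hn
  have hn0 : n ≠ 0 := (sum_pos (fun i hi ↦ Nat.cast_pos.2 (hk i hi)) hC).ne'
  set Q := n ^ ((#C : ℤ) - 4) * ∏ i ∈ C, cycleWeight (k i) with hQ
  have hcut : ∀ i ∈ C, (k i : ℚ) * ∑ r ∈ Ico 1 (k i), splitWeight k (C.erase i) r (k i - r) =
      Q * (2 * n * (k i - 1) - ∑ j ∈ C.erase i, 2 * (k i * k j * (k i + k j) *
        cutInteraction (k i) (k j)) / cycleWeight (k i)) := by
    intro i hi
    have hai := ha i hi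
    rw [mul_sum_splitWeight (fun j hj ↦ hk j (mem_of_mem_erase hj)) (hk i hi),
      add_sum_erase C (fun j ↦ (k j : ℚ)) hi, ← hn, card_erase_of_mem hi,
      Nat.cast_pred hC.card_pos, hQ, ← mul_prod_erase C _ hi, ← sum_div, ← mul_sum,
      show (#C : ℤ) - 1 - 3 = #C - 4 by ring]
    field_simp
  have hjoin : ∀ i ∈ C, ∀ j ∈ C.erase i, (k i : ℚ) * k j * (n ^ ((#C : ℤ) - 4) *
        (cycleWeight (k i + k j) * ∏ l ∈ (C.erase i).erase j, cycleWeight (k l))) =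
      Q * (k i * k j * cycleWeight (k i + k j) / (cycleWeight (k i) * cycleWeight (k j))) := by
    intro i hi j hj
    have hai := ha i hi
    have haj := ha j (mem_of_mem_erase hj)
    rw [hQ, ← mul_prod_erase C _ hi, ← mul_prod_erase (C.erase i) _ hj]
    field_simp
  have hcount : ∑ i ∈ C, 2 * n * ((k i : ℚ) - 1) = 2 * n * (n - #C) := by
    rw [← mul_sum, sum_sub_distrib, ← hn, sum_const, nsmul_one]
  have hpair := sum_pairInteraction hk hC
  simp only [pairInteraction, sum_sub_distrib] at hpair
  rw [joinWeight, sum_congr rfl hcut, sum_congr rfl fun i hi ↦ sum_congr rfl (hjoin i hi)]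
  simp only [← mul_sum, sum_sub_distrib, hcount]
  rw [hurwitzWeight, ← hn, show (#C : ℤ) - 3 = #C - 4 + 1 by ring, zpow_add_one₀ hn0]
  linear_combination Q * hpair

end CutAndJoinIdentity

section Blocks

variable {α : Type*}

/-- The setoid obtained from `V` by merging the classes of `x` and `y`. -/
def link (V : Setoid α) (x y : α) : Setoid α where
  r a b := V a b ∨ (V a x ∨ V a y) ∧ (V b x ∨ V b y)
  iseqv :=
    { refl := fun a ↦ Or.inl (V.refl a)
      symm := fun h ↦ h.imp V.symm And.symm
      trans := by
        rintro a b c (hab | hab) (hbc | hbc)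
        · exact Or.inl (V.trans hab hbc)
        · exact Or.inr ⟨hbc.1.imp (V.trans hab) (V.trans hab), hbc.2⟩
        · have hcb := V.symm hbc
          exact Or.inr ⟨hab.1, hab.2.imp (V.trans hcb) (V.trans hcb)⟩
        · exact Or.inr ⟨hab.1, hbc.2⟩ }

variable {U V W : Setoid α} {a b x y : α}

theorem link_apply : link V x y a b ↔ V a b ∨ (V a x ∨ V a y) ∧ (V b x ∨ V b y) := Iff.rfl

theorem le_link : V ≤ link V x y := fun _ _ ↦ Or.inl

theorem link_left_right : link V x y x y := Or.inr ⟨Or.inl (V.refl x), Or.inr (V.refl y)⟩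

theorem link_le_iff : link V x y ≤ W ↔ V ≤ W ∧ W x y := by
  refine ⟨fun h ↦ ⟨le_link.trans h, h link_left_right⟩, fun ⟨hVW, hxy⟩ a b hab ↦ ?_⟩
  have toward_x : ∀ {c}, V c x ∨ V c y → W c x := fun hc ↦
    hc.elim (fun h ↦ hVW h) fun h ↦ W.trans (hVW h) (W.symm hxy)
  exact hab.elim (fun h ↦ hVW h) fun h ↦ W.trans (toward_x h.1) (W.symm (toward_x h.2))

theorem link_eq_self (hxy : V x y) : link V x y = V :=
  le_antisymm (link_le_iff.2 ⟨le_rfl, hxy⟩) le_link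

/-- The setoid obtained from `V` by separating the elements of `A` from the others. -/
def separate (V : Setoid α) (A : Finset α) : Setoid α := V ⊓ Setoid.ker (· ∈ A)

theorem separate_apply {A : Finset α} : separate V A a b ↔ V a b ∧ (a ∈ A ↔ b ∈ A) :=
  and_congr_right fun _ ↦ eq_iff_iff

/-- `S` is a union of classes of `U`. -/
def IsSaturated (U : Setoid α) (S : Finset α) : Prop := ∀ ⦃a b⦄, U a b → a ∈ S → b ∈ S

theorem le_separate {A : Finset α} (hUV : U ≤ V) (hA : IsSaturated U A) : U ≤ separate V A :=
  fun _ _ hab ↦ separate_apply.2 ⟨hUV hab, ⟨hA hab, hA (U.symm hab)⟩⟩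

variable [Fintype α] [DecidableEq α]

open Classical in
/-- The classes of a setoid on a finite type, as a finite partition. -/
noncomputable def blocks (V : Setoid α) : Finpartition (univ : Finset α) :=
  Finpartition.ofSetoid V

theorem mem_part_blocks : b ∈ (blocks V).part a ↔ V a b := by
  classical exact Finpartition.mem_part_ofSetoid_iff_rel

theorem self_mem_part_blocks (V : Setoid α) (x : α) : x ∈ (blocks V).part x :=
  mem_part_blocks.2 (V.refl x)

theorem part_mem_blocks (V : Setoid α) (x : α) : (blocks V).part x ∈ (blocks V).parts :=
  (blocks V).part_mem.2 (mem_univ x)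

theorem exists_part_eq {B : Finset α} (hB : B ∈ (blocks V).parts) : ∃ x, (blocks V).part x = B := by
  obtain ⟨x, -, hx⟩ := (blocks V).part_surjOn hB
  exact ⟨x, hx⟩

theorem part_blocks_eq_iff : (blocks V).part x = (blocks V).part y ↔ V x y := by
  rw [← (blocks V).mem_part_iff_part_eq_part (mem_univ x) (mem_univ y), mem_part_blocks]
  exact V.comm'

theorem blocks_injective : Function.Injective (blocks : Setoid α → _) := fun V W h ↦ by
  ext a b
  rw [← mem_part_blocks, h, mem_part_blocks]

noncomputable instance : Fintype (Setoid α) := Fintype.ofInjective blocks blocks_injective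

/-- The classes of `U` contained in `S`. -/
noncomputable def blocksIn (U : Setoid α) (S : Finset α) : Finset (Finset α) :=
  {c ∈ (blocks U).parts | c ⊆ S}

variable {S : Finset α}

theorem isSaturated_part (hUW : U ≤ W) (x : α) : IsSaturated U ((blocks W).part x) :=
  fun _ _ hab ha ↦ mem_part_blocks.2 (W.trans (mem_part_blocks.1 ha) (hUW hab))

theorem isSaturated_of_mem_parts (hUW : U ≤ W) (hS : S ∈ (blocks W).parts) : IsSaturated U S := by
  obtain ⟨x, rfl⟩ := exists_part_eq hS
  exact isSaturated_part hUW x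

theorem isSaturated_biUnion {T : Finset (Finset α)} (hT : T ⊆ (blocks U).parts) :
    IsSaturated U (T.biUnion id) := by
  intro a b hab ha
  obtain ⟨c, hc, hac⟩ := mem_biUnion.1 ha
  exact mem_biUnion.2 ⟨c, hc, isSaturated_of_mem_parts le_rfl (hT hc) hab hac⟩

theorem mem_blocksIn {c : Finset α} : c ∈ blocksIn U S ↔ c ∈ (blocks U).parts ∧ c ⊆ S := mem_filter

theorem blocksIn_subset : blocksIn U S ⊆ (blocks U).parts := filter_subset _ _

theorem blocksIn_univ : blocksIn U univ = (blocks U).parts :=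
  filter_true_of_mem fun c _ ↦ subset_univ c

theorem IsSaturated.part_subset (hS : IsSaturated U S) (hx : x ∈ S) : (blocks U).part x ⊆ S :=
  fun _ hb ↦ hS (mem_part_blocks.1 hb) hx

theorem IsSaturated.part_mem_blocksIn (hS : IsSaturated U S) (hx : x ∈ S) :
    (blocks U).part x ∈ blocksIn U S :=
  mem_blocksIn.2 ⟨part_mem_blocks U x, hS.part_subset hx⟩

theorem IsSaturated.biUnion_blocksIn (hS : IsSaturated U S) : (blocksIn U S).biUnion id = S := by
  refine Subset.antisymm (biUnion_subset.2 fun c hc ↦ (mem_blocksIn.1 hc).2) fun x hx ↦ ?_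
  exact mem_biUnion.2 ⟨_, hS.part_mem_blocksIn hx, self_mem_part_blocks U x⟩

theorem blocksIn_biUnion {T : Finset (Finset α)} (hT : T ⊆ (blocks U).parts) :
    blocksIn U (T.biUnion id) = T := by
  refine Subset.antisymm (fun c hc ↦ ?_) fun c hc ↦
    mem_blocksIn.2 ⟨hT hc, subset_biUnion_of_mem id hc⟩
  obtain ⟨hc, hcT⟩ := mem_blocksIn.1 hc
  obtain ⟨x, hx⟩ := (blocks U).nonempty_of_mem_parts hc
  obtain ⟨d, hd, hxd⟩ := mem_biUnion.1 (hcT hx)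
  rwa [(blocks U).eq_of_mem_parts hc (hT hd) hx hxd]

theorem IsSaturated.blocksIn_sdiff {A : Finset α} (hA : IsSaturated U A) :
    blocksIn U (S \ A) = blocksIn U S \ blocksIn U A := by
  ext c
  rw [mem_sdiff, mem_blocksIn, mem_blocksIn, mem_blocksIn, subset_sdiff]
  suffices hdisj : c ∈ (blocks U).parts → (Disjoint c A ↔ ¬c ⊆ A) by tauto
  intro hc
  obtain ⟨x, rfl⟩ := exists_part_eq hc
  have hxc := self_mem_part_blocks U x
  refine ⟨fun hdisj hcA ↦ disjoint_left.1 hdisj hxc (hcA hxc), fun hcA ↦ disjoint_left.2 ?_⟩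
  exact fun a hac haA ↦ hcA (hA.part_subset (hA (U.symm (mem_part_blocks.1 hac)) haA))

theorem IsSaturated.sum_eq_sum_blocksIn {M : Type*} [AddCommMonoid M] (hS : IsSaturated U S)
    (f : α → M) : ∑ x ∈ S, f x = ∑ c ∈ blocksIn U S, ∑ x ∈ c, f x := by
  conv_lhs => rw [← hS.biUnion_blocksIn]
  exact sum_biUnion fun c hc d hd hcd ↦
    (blocks U).disjoint (blocksIn_subset hc) (blocksIn_subset hd) hcd

theorem IsSaturated.sum_card_blocksIn (hS : IsSaturated U S) :
    ∑ c ∈ blocksIn U S, #c = #S := by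
  simp only [card_eq_sum_ones]
  exact (hS.sum_eq_sum_blocksIn fun _ ↦ 1).symm

theorem sum_card_blocksIn_parts (hUW : U ≤ W) :
    ∑ S ∈ (blocks W).parts, #(blocksIn U S) = #(blocks U).parts := by
  rw [← card_biUnion]
  · congr 1
    refine Subset.antisymm (biUnion_subset.2 fun S _ ↦ blocksIn_subset) fun c hc ↦ ?_
    obtain ⟨x, rfl⟩ := exists_part_eq hc
    exact mem_biUnion.2 ⟨_, part_mem_blocks W x,
      (isSaturated_part hUW x).part_mem_blocksIn (self_mem_part_blocks W x)⟩
  · refine fun S hS S' hS' hne ↦ disjoint_left.2 fun c hc hc' ↦ hne ?_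
    obtain ⟨hcU, hcS⟩ := mem_blocksIn.1 hc
    obtain ⟨x, hx⟩ := (blocks U).nonempty_of_mem_parts hcU
    exact (blocks W).eq_of_mem_parts hS hS' (hcS hx) ((mem_blocksIn.1 hc').2 hx)

theorem part_link_of_or (ha : V a x ∨ V a y) :
    (blocks (link V x y)).part a = (blocks V).part x ∪ (blocks V).part y := by
  ext b
  rw [mem_union, mem_part_blocks, mem_part_blocks, mem_part_blocks, link_apply, V.comm' (x := x),
    V.comm' (x := y)]
  refine ⟨fun h ↦ h.elim (fun hab ↦ ?_) And.right, fun hb ↦ Or.inr ⟨ha, hb⟩⟩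
  exact ha.imp (V.trans (V.symm hab)) (V.trans (V.symm hab))

theorem part_link_of_not (ha : ¬(V a x ∨ V a y)) :
    (blocks (link V x y)).part a = (blocks V).part a := by
  ext b
  rw [mem_part_blocks, mem_part_blocks, link_apply]
  tauto

theorem parts_link : (blocks (link V x y)).parts = insert ((blocks V).part x ∪ (blocks V).part y)
    (((blocks V).parts.erase ((blocks V).part x)).erase ((blocks V).part y)) := by
  have part_ne_part_iff : ∀ {a},
      ((blocks V).part a ≠ (blocks V).part y ∧ (blocks V).part a ≠ (blocks V).part x) ↔
        ¬(V a x ∨ V a y) := by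
    intro a
    rw [Ne, Ne, part_blocks_eq_iff, part_blocks_eq_iff]
    tauto
  ext B
  simp only [mem_insert, mem_erase]
  constructor
  · intro hB
    obtain ⟨a, rfl⟩ := exists_part_eq hB
    by_cases ha : V a x ∨ V a y
    · exact Or.inl (part_link_of_or ha)
    · rw [part_link_of_not ha, ← and_assoc, part_ne_part_iff]
      exact Or.inr ⟨ha, part_mem_blocks V a⟩
  · rintro (rfl | ⟨hBy, hBx, hB⟩)
    · rw [← part_link_of_or (Or.inl (V.refl x))]
      exact part_mem_blocks _ x
    · obtain ⟨a, rfl⟩ := exists_part_eq hB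
      rw [← part_link_of_not (part_ne_part_iff.1 ⟨hBy, hBx⟩)]
      exact part_mem_blocks _ a

theorem part_union_part_notMem : (blocks V).part x ∪ (blocks V).part y ∉
    ((blocks V).parts.erase ((blocks V).part x)).erase ((blocks V).part y) := by
  intro h
  obtain ⟨hne, h⟩ := mem_erase.1 (mem_of_mem_erase h)
  exact hne ((blocks V).eq_of_mem_parts h (part_mem_blocks V x)
    (mem_union_left _ (self_mem_part_blocks V x)) (self_mem_part_blocks V x))

theorem part_mem_erase_part (hxy : ¬V x y) {P : Finset (Finset α)} (hy : (blocks V).part y ∈ P) :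
    (blocks V).part y ∈ P.erase ((blocks V).part x) :=
  mem_erase.2 ⟨fun h ↦ hxy (part_blocks_eq_iff.1 h.symm), hy⟩

theorem card_parts_link_add_one (hxy : ¬V x y) :
    #(blocks (link V x y)).parts + 1 = #(blocks V).parts := by
  rw [parts_link, card_insert_of_notMem part_union_part_notMem,
    card_erase_add_one (part_mem_erase_part hxy (part_mem_blocks V y)),
    card_erase_add_one (part_mem_blocks V x)]

theorem IsSaturated.blocksIn_link (hS : IsSaturated U S) (hx : x ∈ S) (hy : y ∈ S) :
    blocksIn (link U x y) S = insert ((blocks U).part x ∪ (blocks U).part y)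
      (((blocksIn U S).erase ((blocks U).part x)).erase ((blocks U).part y)) := by
  rw [blocksIn, parts_link, filter_insert,
    if_pos (union_subset (hS.part_subset hx) (hS.part_subset hy)), filter_erase, filter_erase,
    blocksIn]

theorem prod_parts_link {M : Type*} [CommMonoid M] (hxy : ¬V x y) (f : Finset α → M) :
    ∏ B ∈ (blocks V).parts, f B = f ((blocks V).part x) * (f ((blocks V).part y) *
      ∏ B ∈ (blocks (link V x y)).parts.erase ((blocks (link V x y)).part x), f B) := by
  rw [part_link_of_or (Or.inl (V.refl x)), parts_link, erase_insert part_union_part_notMem,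
    mul_prod_erase _ _ (part_mem_erase_part hxy (part_mem_blocks V y)),
    mul_prod_erase _ _ (part_mem_blocks V x)]

end Blocks

section BlocksWeight

variable {ι : Type*} [DecidableEq ι] {k : ι → ℕ} {C K : Finset ι} {i j : ι}

theorem splitWeight_eq_sum_hurwitzWeight (hi : i ∉ K) (hj : j ∉ K) :
    splitWeight k K (k i) (k j) =
      ∑ T ∈ K.powerset, hurwitzWeight k (insert i T) * hurwitzWeight k (insert j (K \ T)) := by
  refine sum_congr rfl fun T hT ↦ ?_
  have hiT : i ∉ T := notMem_mono (mem_powerset.1 hT) hi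
  have hjT : j ∉ K \ T := notMem_mono sdiff_subset hj
  have hcard : ∀ m : ℕ, ((m + 1 : ℕ) : ℤ) - 3 = m - 2 := fun m ↦ by push_cast; ring
  rw [hurwitzWeight, hurwitzWeight, card_insert_of_notMem hiT, card_insert_of_notMem hjT,
    sum_insert hiT, sum_insert hjT, prod_insert hiT, prod_insert hjT, hcard, hcard]

theorem joinWeight_eq_sum_hurwitzWeight (join : ι → ι → ι)
    (hjoin : ∀ i ∈ C, ∀ j ∈ C.erase i, k (join i j) = k i + k j)
    (hmem : ∀ i ∈ C, ∀ j ∈ C.erase i, join i j ∉ (C.erase i).erase j) :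
    joinWeight k C = ∑ i ∈ C, ∑ j ∈ C.erase i,
      (k i : ℚ) * k j * hurwitzWeight k (insert (join i j) ((C.erase i).erase j)) := by
  refine sum_congr rfl fun i hi ↦ sum_congr rfl fun j hj ↦ ?_
  have hcard : #(insert (join i j) ((C.erase i).erase j)) + 1 = #C := by
    rw [card_insert_of_notMem (hmem i hi j hj), card_erase_add_one hj, card_erase_add_one hi]
  have hsum : ∑ l ∈ insert (join i j) ((C.erase i).erase j), (k l : ℚ) = ∑ l ∈ C, (k l : ℚ) := by
    rw [sum_insert (hmem i hi j hj), hjoin i hi j hj, Nat.cast_add, add_assoc,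
      add_sum_erase _ (fun l ↦ (k l : ℚ)) hj, add_sum_erase _ (fun l ↦ (k l : ℚ)) hi]
  rw [hurwitzWeight, hsum, prod_insert (hmem i hi j hj), hjoin i hi j hj, ← hcard,
    Nat.cast_add_one, show ∀ z : ℤ, z + 1 - 4 = z - 3 from fun z ↦ by ring]

variable {α : Type*} [Fintype α] [DecidableEq α] {U V W : Setoid α} {x y : α}

/-- The weight of a permutation with cycle setoid `U` in the count of its factorizations whose
orbits are the classes of `V`: a factor from Hurwitz's formula for each class. -/
noncomputable def blocksWeight (V U : Setoid α) : ℚ :=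
  ∏ B ∈ (blocks V).parts, hurwitzWeight card (blocksIn U B)

/-- The factors of `blocksWeight V U` at the classes other than the class of `x`. -/
noncomputable def restWeight (V U : Setoid α) (x : α) : ℚ :=
  ∏ B ∈ (blocks V).parts.erase ((blocks V).part x), hurwitzWeight card (blocksIn U B)

theorem hurwitzWeight_mul_restWeight (V U : Setoid α) (x : α) :
    hurwitzWeight card (blocksIn U ((blocks V).part x)) * restWeight V U x = blocksWeight V U :=
  mul_prod_erase _ (fun B ↦ hurwitzWeight card (blocksIn U B)) (part_mem_blocks V x)

theorem blocksWeight_eq_of_link (hxy : ¬W x y) :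
    blocksWeight W U = restWeight (link W x y) U x *
      (hurwitzWeight card (blocksIn U ((blocks W).part x)) *
        hurwitzWeight card (blocksIn U ((blocks W).part y))) := by
  rw [blocksWeight, prod_parts_link hxy, restWeight]
  ring

theorem blocksIn_link_of_notMem {S : Finset α} (hx : x ∉ S) (hy : y ∉ S) :
    blocksIn (link U x y) S = blocksIn U S := by
  have part_notMem : ∀ {a}, a ∉ S → (blocks U).part a ∉ blocksIn U S := fun ha h ↦
    ha ((mem_blocksIn.1 h).2 (self_mem_part_blocks U _))
  have hunion : ¬(blocks U).part x ∪ (blocks U).part y ⊆ S := fun h ↦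
    hx (h (mem_union_left _ (self_mem_part_blocks U x)))
  rw [blocksIn, parts_link, filter_insert, if_neg hunion, filter_erase, filter_erase,
    ← blocksIn, erase_eq_of_notMem (part_notMem hx), erase_eq_of_notMem (part_notMem hy)]

theorem restWeight_link (U : Setoid α) (hxy : V x y) :
    restWeight V (link U x y) x = restWeight V U x := by
  refine prod_congr rfl fun B hB ↦ ?_
  obtain ⟨hne, hB⟩ := mem_erase.1 hB
  rw [blocksIn_link_of_notMem fun hx ↦ hne ((blocks V).part_eq_of_mem hB hx).symm]
  refine fun hy ↦ hne ?_
  rw [← (blocks V).part_eq_of_mem hB hy, part_blocks_eq_iff]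
  exact V.symm hxy

/-- The classes of `U` in the class of `x` in `V`, other than those of `x` and `y`. -/
noncomputable def otherBlocks (U V : Setoid α) (x y : α) : Finset (Finset α) :=
  ((blocksIn U ((blocks V).part x)).erase ((blocks U).part x)).erase ((blocks U).part y)

theorem blocksIn_link_part (hUV : U ≤ V) (hxy : V x y) :
    blocksIn (link U x y) ((blocks V).part x) =
      insert ((blocks U).part x ∪ (blocks U).part y) (otherBlocks U V x y) :=
  (isSaturated_part hUV x).blocksIn_link (self_mem_part_blocks V x) (mem_part_blocks.2 hxy)

theorem blocksWeight_link (hUV : U ≤ V) (hxy : V x y) :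
    blocksWeight V (link U x y) = restWeight V U x * hurwitzWeight card
      (insert ((blocks U).part x ∪ (blocks U).part y) (otherBlocks U V x y)) := by
  rw [← hurwitzWeight_mul_restWeight V _ x, restWeight_link U hxy, mul_comm,
    blocksIn_link_part hUV hxy]

variable {A : Finset α}

theorem link_separate (hA : A ⊆ (blocks V).part x) (hx : x ∈ A) (hy : y ∉ A) (hxy : V x y) :
    link (separate V A) x y = V := by
  refine le_antisymm (link_le_iff.2 ⟨inf_le_left, hxy⟩) fun a b hab ↦ ?_
  have rel_of_mem : ∀ {c}, c ∈ A → V c x := fun hc ↦ V.symm (mem_part_blocks.1 (hA hc))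
  have separate_or : ∀ {c}, V c x → separate V A c x ∨ separate V A c y := by
    intro c hc
    simp only [separate_apply, hx, hy, iff_true, iff_false]
    by_cases hcA : c ∈ A
    · exact Or.inl ⟨hc, hcA⟩
    · exact Or.inr ⟨V.trans hc hxy, hcA⟩
  by_cases hAab : a ∈ A ↔ b ∈ A
  · exact Or.inl (separate_apply.2 ⟨hab, hAab⟩)
  · have hax : V a x := by
      by_cases ha : a ∈ A
      · exact rel_of_mem ha
      · exact V.trans hab (rel_of_mem (by tauto))
    exact Or.inr ⟨separate_or hax, separate_or (V.trans (V.symm hab) hax)⟩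

theorem separate_link (hxy : ¬W x y) : separate (link W x y) ((blocks W).part x) = W := by
  ext a b
  rw [separate_apply, link_apply, mem_part_blocks, mem_part_blocks, W.comm' (x := x),
    W.comm' (x := x)]
  have hsame : W a b → (W a x ↔ W b x) := fun hab ↦ ⟨W.trans (W.symm hab), W.trans hab⟩
  have hx : W a x → W b x → W a b := fun ha hb ↦ W.trans ha (W.symm hb)
  have hy : W a y → W b y → W a b := fun ha hb ↦ W.trans ha (W.symm hb)
  have hne : ∀ {c}, W c x → ¬W c y := fun hx hy ↦ hxy (W.trans (W.symm hx) hy)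
  have hna := hne (c := a)
  have hnb := hne (c := b)
  tauto

theorem part_separate (hA : A ⊆ (blocks V).part x) (hx : x ∈ A) :
    (blocks (separate V A)).part x = A := by
  ext a
  rw [mem_part_blocks, separate_apply]
  have := @hA a
  rw [mem_part_blocks] at this
  tauto

theorem part_right_separate (hy : y ∉ A) (hxy : V x y) :
    (blocks (separate V A)).part y = (blocks V).part x \ A := by
  ext a
  rw [mem_part_blocks, separate_apply, mem_sdiff, mem_part_blocks]
  have : V y a ↔ V x a := ⟨V.trans hxy, V.trans (V.symm hxy)⟩
  tauto

variable {T : Finset (Finset α)}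

theorem insert_part_subset_blocksIn (hUV : U ≤ V) (hT : T ⊆ otherBlocks U V x y) :
    insert ((blocks U).part x) T ⊆ blocksIn U ((blocks V).part x) :=
  insert_subset ((isSaturated_part hUV x).part_mem_blocksIn (self_mem_part_blocks V x))
    (hT.trans ((erase_subset _ _).trans (erase_subset _ _)))

theorem blocksIn_biUnion_insert_part (hUV : U ≤ V) (hT : T ⊆ otherBlocks U V x y) :
    blocksIn U ((insert ((blocks U).part x) T).biUnion id) = insert ((blocks U).part x) T :=
  blocksIn_biUnion ((insert_part_subset_blocksIn hUV hT).trans blocksIn_subset)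

theorem biUnion_insert_part_subset (hUV : U ≤ V) (hT : T ⊆ otherBlocks U V x y) :
    (insert ((blocks U).part x) T).biUnion id ⊆ (blocks V).part x :=
  biUnion_subset.2 fun _ hc ↦ (mem_blocksIn.1 (insert_part_subset_blocksIn hUV hT hc)).2

theorem mem_biUnion_insert_part (U : Setoid α) (x : α) (T : Finset (Finset α)) :
    x ∈ (insert ((blocks U).part x) T).biUnion id :=
  mem_biUnion.2 ⟨_, mem_insert_self _ _, self_mem_part_blocks U x⟩

theorem notMem_biUnion_insert_part (hxy : ¬U x y) (hT : T ⊆ otherBlocks U V x y) :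
    y ∉ (insert ((blocks U).part x) T).biUnion id := by
  intro hy
  obtain ⟨c, hc, hyc⟩ := mem_biUnion.1 hy
  rcases mem_insert.1 hc with rfl | hc
  · exact hxy (mem_part_blocks.1 hyc)
  · obtain ⟨hne, hcV⟩ := mem_erase.1 (hT hc)
    exact hne ((blocks U).part_eq_of_mem (blocksIn_subset (mem_of_mem_erase hcV)) hyc).symm

theorem blocksIn_sdiff_insert_part (hxy : ¬U x y) (hUV : U ≤ V) (hxyV : V x y)
    (hT : T ⊆ otherBlocks U V x y) :
    blocksIn U ((blocks V).part x) \ insert ((blocks U).part x) T =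
      insert ((blocks U).part y) (otherBlocks U V x y \ T) := by
  have hy := part_mem_erase_part hxy
    ((isSaturated_part hUV x).part_mem_blocksIn (mem_part_blocks.2 hxyV))
  have hyT : (blocks U).part y ∉ T := fun h ↦ notMem_erase _ _ (hT h)
  rw [otherBlocks, ← insert_sdiff_of_notMem _ hyT, insert_erase hy, ← sdiff_singleton_eq_erase,
    sdiff_sdiff_left, sup_eq_union, ← insert_eq]

theorem not_separate_biUnion_insert_part (hxy : ¬U x y) (hT : T ⊆ otherBlocks U V x y) :
    ¬separate V ((insert ((blocks U).part x) T).biUnion id) x y := fun h ↦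
  notMem_biUnion_insert_part hxy hT ((separate_apply.1 h).2.1 (mem_biUnion_insert_part U x T))

theorem isSaturated_biUnion_insert_part (hUV : U ≤ V) (hT : T ⊆ otherBlocks U V x y) :
    IsSaturated U ((insert ((blocks U).part x) T).biUnion id) :=
  isSaturated_biUnion ((insert_part_subset_blocksIn hUV hT).trans blocksIn_subset)

theorem erase_part_blocksIn_subset_otherBlocks (hWV : W ≤ V) (hxy : ¬W x y) :
    (blocksIn U ((blocks W).part x)).erase ((blocks U).part x) ⊆ otherBlocks U V x y := by
  intro c hc
  obtain ⟨hcx, hc⟩ := mem_erase.1 hc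
  obtain ⟨hcU, hcW⟩ := mem_blocksIn.1 hc
  refine mem_erase.2 ⟨?_, mem_erase.2 ⟨hcx, mem_blocksIn.2 ⟨hcU, fun a ha ↦ ?_⟩⟩⟩
  · rintro rfl
    exact hxy (mem_part_blocks.1 (hcW (self_mem_part_blocks U y)))
  · exact mem_part_blocks.2 (hWV (mem_part_blocks.1 (hcW ha)))

theorem blocksWeight_separate (hxy : ¬U x y) (hUV : U ≤ V) (hxyV : V x y)
    (hT : T ⊆ otherBlocks U V x y) :
    blocksWeight (separate V ((insert ((blocks U).part x) T).biUnion id)) U =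
      restWeight V U x * (hurwitzWeight card (insert ((blocks U).part x) T) *
        hurwitzWeight card (insert ((blocks U).part y) (otherBlocks U V x y \ T))) := by
  have hA := biUnion_insert_part_subset hUV hT
  have hx := mem_biUnion_insert_part U x T
  have hy := notMem_biUnion_insert_part hxy hT
  rw [blocksWeight_eq_of_link (not_separate_biUnion_insert_part hxy hT),
    link_separate hA hx hy hxyV, part_separate hA hx, part_right_separate hy hxyV,
    (isSaturated_biUnion_insert_part hUV hT).blocksIn_sdiff, blocksIn_biUnion_insert_part hUV hT,
    blocksIn_sdiff_insert_part hxy hUV hxyV hT]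

open Classical in
/-- The `W` on the left arise from `V` by splitting the class of `x` and `y` in two, and are
determined by the set of those classes of `U`, other than that of `x`, that `W` puts with `x`. -/
theorem sum_blocksWeight_of_link_eq (hxy : ¬U x y) (hUV : U ≤ V) (hxyV : V x y) :
    ∑ W with U ≤ W ∧ link W x y = V ∧ ¬W x y, blocksWeight W U =
      restWeight V U x *
        splitWeight card (otherBlocks U V x y) #((blocks U).part x) #((blocks U).part y) := by
  have hx : (blocks U).part x ∉ otherBlocks U V x y := fun h ↦
    notMem_erase _ _ (mem_of_mem_erase h)
  rw [splitWeight_eq_sum_hurwitzWeight hx (notMem_erase _ _), mul_sum]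
  symm
  refine sum_nbij' (fun T ↦ separate V ((insert ((blocks U).part x) T).biUnion id))
    (fun W ↦ (blocksIn U ((blocks W).part x)).erase ((blocks U).part x))
    (fun T hT ↦ ?_) (fun W hW ↦ ?_) (fun T hT ↦ ?_) (fun W hW ↦ ?_)
    fun T hT ↦ (blocksWeight_separate hxy hUV hxyV (mem_powerset.1 hT)).symm
  · have hT := mem_powerset.1 hT
    exact mem_filter.2 ⟨mem_univ _, le_separate hUV (isSaturated_biUnion_insert_part hUV hT),
      link_separate (biUnion_insert_part_subset hUV hT) (mem_biUnion_insert_part U x T)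
        (notMem_biUnion_insert_part hxy hT) hxyV, not_separate_biUnion_insert_part hxy hT⟩
  · obtain ⟨-, -, rfl, hxyW⟩ := mem_filter.1 hW
    exact mem_powerset.2 (erase_part_blocksIn_subset_otherBlocks le_link hxyW)
  · have hT := mem_powerset.1 hT
    rw [part_separate (biUnion_insert_part_subset hUV hT) (mem_biUnion_insert_part U x T),
      blocksIn_biUnion_insert_part hUV hT, erase_insert (notMem_mono hT hx)]
  · obtain ⟨-, hUW, rfl, hxyW⟩ := mem_filter.1 hW
    have hsat : IsSaturated U ((blocks W).part x) := isSaturated_part hUW x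
    rw [insert_erase (hsat.part_mem_blocksIn (self_mem_part_blocks W x)), hsat.biUnion_blocksIn,
      separate_link hxyW]

end BlocksWeight

section Cycles

variable {α : Type*}

/-- The setoid whose classes are the cycles of `σ`, including the fixed points. -/
abbrev cycleSetoid (σ : Perm α) : Setoid α := Perm.SameCycle.setoid σ

variable {V : Setoid α} {σ τ : Perm α} {x y : α}

theorem cycleSetoid_apply_self (σ : Perm α) (x : α) : cycleSetoid σ x (σ x) :=
  (Perm.SameCycle.refl σ x).apply_right

theorem cycleSetoid_le_iff : cycleSetoid σ ≤ V ↔ ∀ a, V a (σ a) := by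
  refine ⟨fun h a ↦ h (cycleSetoid_apply_self σ a), fun h a b hab ↦ ?_⟩
  obtain ⟨i, rfl⟩ := hab
  induction i with
  | zero => exact V.refl _
  | succ i ih =>
    rw [add_comm, zpow_add, zpow_one]
    exact V.trans ih (h _)
  | pred i ih =>
    refine V.trans ih (V.symm ?_)
    have := h ((σ ^ (-(i : ℤ) - 1)) a)
    rwa [← Perm.mul_apply, ← zpow_one_add, add_sub_cancel] at this

theorem cycleSetoid_mul_le (hσ : cycleSetoid σ ≤ V) (hτ : cycleSetoid τ ≤ V) :
    cycleSetoid (τ * σ) ≤ V :=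
  cycleSetoid_le_iff.2 fun a ↦ V.trans (hσ (cycleSetoid_apply_self σ a))
    (hτ (cycleSetoid_apply_self τ (σ a)))

theorem cycleSetoid_one : cycleSetoid (1 : Perm α) = ⊥ :=
  eq_bot_iff.2 (cycleSetoid_le_iff.2 fun _ ↦ rfl)

open Function (minimalPeriod IsPeriodicPt IsFixedPt minimalPeriod_pos_of_mem_periodicPts
  iterate_injOn_Iio_minimalPeriod not_isPeriodicPt_of_pos_of_lt_minimalPeriod
  iterate_minimalPeriod iterate_mod_minimalPeriod_eq)

theorem cycleSetoid_iterate (σ : Perm α) (x : α) (i : ℕ) : cycleSetoid σ x (σ^[i] x) :=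
  ⟨i, by rw [zpow_natCast, Perm.iterate_eq_pow]⟩

theorem minimalPeriod_pos [Finite α] (σ : Perm α) (x : α) : 0 < minimalPeriod σ x :=
  minimalPeriod_pos_of_mem_periodicPts (σ.injective.mem_periodicPts x)

theorem injOn_range_minimalPeriod (σ : Perm α) (x : α) :
    Set.InjOn (fun i ↦ σ^[i] x) (range (minimalPeriod σ x)) := by
  rw [coe_range]
  exact iterate_injOn_Iio_minimalPeriod

theorem iterate_ne_of_lt_minimalPeriod {i j : ℕ} (hi0 : 0 < i) (hij : i < j)
    (hj : j < minimalPeriod σ x) : σ^[i] x ≠ x ∧ σ^[i] x ≠ σ^[j] x :=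
  ⟨not_isPeriodicPt_of_pos_of_lt_minimalPeriod hi0.ne' (hij.trans hj),
    fun h ↦ hij.ne (iterate_injOn_Iio_minimalPeriod (hij.trans hj) hj h)⟩

variable [DecidableEq α]

theorem cycleSetoid_swap_le_iff : cycleSetoid (swap x y) ≤ V ↔ V x y := by
  refine ⟨fun h ↦ by simpa using h (cycleSetoid_apply_self (swap x y) x), fun h ↦ ?_⟩
  refine cycleSetoid_le_iff.2 fun a ↦ ?_
  rcases eq_or_ne a x with rfl | hax
  · rwa [swap_apply_left]
  rcases eq_or_ne a y with rfl | hay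
  · rw [swap_apply_right]
    exact V.symm h
  · rw [swap_apply_of_ne_of_ne hax hay]

theorem sup_cycleSetoid_swap : V ⊔ cycleSetoid (swap x y) = link V x y :=
  eq_of_forall_ge_iff fun W ↦ by rw [sup_le_iff, cycleSetoid_swap_le_iff, link_le_iff]

theorem cycleSetoid_swap_mul_le_link : cycleSetoid (swap x y * σ) ≤ link (cycleSetoid σ) x y :=
  cycleSetoid_mul_le le_link (cycleSetoid_swap_le_iff.2 link_left_right)

theorem cycleSetoid_le_link_swap_mul :
    cycleSetoid σ ≤ link (cycleSetoid (swap x y * σ)) x y := by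
  simpa only [swap_mul_self_mul] using
    cycleSetoid_swap_mul_le_link (σ := swap x y * σ) (x := x) (y := y)

theorem swap_mul_iterate_apply {i p : ℕ}
    (h : ∀ j, 0 < j → j < p → σ^[j] x ≠ x ∧ σ^[j] x ≠ y) (hi : i < p) :
    (swap x y * σ)^[i] x = σ^[i] x := by
  induction i with
  | zero => rfl
  | succ i ih =>
    have hne := h (i + 1) i.succ_pos hi
    rw [Function.iterate_succ_apply', ih (Nat.lt_of_succ_lt hi), Perm.mul_apply,
      ← Function.iterate_succ_apply' σ, swap_apply_of_ne_of_ne hne.1 hne.2]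

theorem swap_mul_iterate_apply_eq_swap {p : ℕ}
    (h : ∀ j, 0 < j → j < p → σ^[j] x ≠ x ∧ σ^[j] x ≠ y) (hp : 0 < p) :
    (swap x y * σ)^[p] x = swap x y (σ^[p] x) := by
  obtain ⟨i, rfl⟩ := Nat.exists_eq_add_of_le' hp
  rw [Function.iterate_succ_apply', swap_mul_iterate_apply h i.lt_succ_self, Perm.mul_apply,
    ← Function.iterate_succ_apply' σ]

theorem minimalPeriod_swap_mul {j : ℕ} (hj0 : 0 < j) (hj : j < minimalPeriod σ x) :
    minimalPeriod (swap x (σ^[j] x) * σ) x = j := by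
  have hne : ∀ i, 0 < i → i < j → σ^[i] x ≠ x ∧ σ^[i] x ≠ σ^[j] x := fun i hi0 hij ↦
    iterate_ne_of_lt_minimalPeriod hi0 hij hj
  have hper : IsPeriodicPt (swap x (σ^[j] x) * σ) j x := by
    rw [IsPeriodicPt, IsFixedPt, swap_mul_iterate_apply_eq_swap hne hj0, swap_apply_right]
  refine le_antisymm (hper.minimalPeriod_le hj0) (not_lt.1 fun hlt ↦ ?_)
  refine (hne _ (hper.minimalPeriod_pos hj0) hlt).1 ?_
  rw [← swap_mul_iterate_apply hne hlt, iterate_minimalPeriod]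

theorem cycleSetoid_swap_mul_apply [Finite α] (hxy : ¬cycleSetoid σ x y) :
    cycleSetoid (swap x y * σ) x y := by
  have hne : ∀ j, 0 < j → j < minimalPeriod σ x → σ^[j] x ≠ x ∧ σ^[j] x ≠ y := fun j hj0 hj ↦
    ⟨not_isPeriodicPt_of_pos_of_lt_minimalPeriod hj0.ne' hj,
      fun h ↦ hxy (h ▸ cycleSetoid_iterate σ x j)⟩
  have hy : (swap x y * σ)^[minimalPeriod σ x] x = y := by
    rw [swap_mul_iterate_apply_eq_swap hne (minimalPeriod_pos σ x), iterate_minimalPeriod,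
      swap_apply_left]
  have hcycle := cycleSetoid_iterate (swap x y * σ) x (minimalPeriod σ x)
  rwa [hy] at hcycle

theorem part_cycleSetoid [Fintype α] (σ : Perm α) (x : α) : (blocks (cycleSetoid σ)).part x =
    (range (minimalPeriod σ x)).image fun i ↦ σ^[i] x := by
  ext y
  simp only [mem_part_blocks, mem_image, mem_range]
  constructor
  · intro h
    obtain ⟨i, -, rfl⟩ := Perm.SameCycle.exists_pow_eq' h
    refine ⟨i % minimalPeriod σ x, Nat.mod_lt _ (minimalPeriod_pos σ x), ?_⟩
    rw [iterate_mod_minimalPeriod_eq, Perm.iterate_eq_pow]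
  · rintro ⟨i, -, rfl⟩
    exact cycleSetoid_iterate σ x i

theorem card_part_cycleSetoid [Fintype α] (σ : Perm α) (x : α) :
    #((blocks (cycleSetoid σ)).part x) = minimalPeriod σ x := by
  rw [part_cycleSetoid, card_image_of_injOn (injOn_range_minimalPeriod σ x), card_range]

theorem erase_part_cycleSetoid [Fintype α] (σ : Perm α) (x : α) :
    ((blocks (cycleSetoid σ)).part x).erase x =
      (Ico 1 (minimalPeriod σ x)).image fun i ↦ σ^[i] x := by
  have hx : x ∉ (Ico 1 (minimalPeriod σ x)).image fun i ↦ σ^[i] x := by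
    simp only [mem_image, mem_Ico, not_exists, not_and]
    exact fun i hi ↦ not_isPeriodicPt_of_pos_of_lt_minimalPeriod (Nat.ne_of_gt hi.1) hi.2
  rw [part_cycleSetoid, range_eq_Ico, ← insert_Ico_add_one_left_eq_Ico (minimalPeriod_pos σ x),
    zero_add, image_insert, Function.iterate_zero_apply, erase_insert hx]

theorem not_cycleSetoid_swap_mul_apply [Finite α] (hne : x ≠ y) (hxy : cycleSetoid σ x y) :
    ¬cycleSetoid (swap x y * σ) x y := by
  cases nonempty_fintype α
  have hy : y ∈ ((blocks (cycleSetoid σ)).part x).erase x :=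
    mem_erase.2 ⟨hne.symm, mem_part_blocks.2 hxy⟩
  rw [erase_part_cycleSetoid] at hy
  obtain ⟨j, hj, rfl⟩ := mem_image.1 hy
  obtain ⟨hj0, hj⟩ := mem_Ico.1 hj
  intro h
  have hy := mem_part_blocks.2 h
  rw [part_cycleSetoid, minimalPeriod_swap_mul hj0 hj] at hy
  obtain ⟨i, hi, hij⟩ := mem_image.1 hy
  have hi := mem_range.1 hi
  have hne : ∀ m, 0 < m → m < j → σ^[m] x ≠ x ∧ σ^[m] x ≠ σ^[j] x := fun m hm0 hmj ↦
    iterate_ne_of_lt_minimalPeriod hm0 hmj hj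
  rw [swap_mul_iterate_apply hne hi] at hij
  exact hi.ne (iterate_injOn_Iio_minimalPeriod (hi.trans hj) hj hij)

theorem cycleSetoid_swap_mul [Finite α] (hxy : ¬cycleSetoid σ x y) :
    cycleSetoid (swap x y * σ) = link (cycleSetoid σ) x y := by
  have hxy' := cycleSetoid_swap_mul_apply hxy
  refine le_antisymm cycleSetoid_swap_mul_le_link (link_le_iff.2 ⟨?_, hxy'⟩)
  simpa only [link_eq_self hxy'] using cycleSetoid_le_link_swap_mul (σ := σ) (x := x) (y := y)

theorem link_cycleSetoid_swap_mul [Finite α] (hne : x ≠ y) (hxy : cycleSetoid σ x y) :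
    link (cycleSetoid (swap x y * σ)) x y = cycleSetoid σ := by
  rw [← cycleSetoid_swap_mul (not_cycleSetoid_swap_mul_apply hne hxy), swap_mul_self_mul]

theorem sum_card_part_swap_mul [Fintype α] {M : Type*} [AddCommMonoid M] (σ : Perm α)
    (x : α) (f : ℕ → ℕ → M) :
    ∑ y ∈ ((blocks (cycleSetoid σ)).part x).erase x,
        f #((blocks (cycleSetoid (swap x y * σ))).part x)
          #((blocks (cycleSetoid (swap x y * σ))).part y) =
      ∑ r ∈ Ico 1 #((blocks (cycleSetoid σ)).part x),
        f r (#((blocks (cycleSetoid σ)).part x) - r) := by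
  have hcard : ∀ y ∈ ((blocks (cycleSetoid σ)).part x).erase x,
      #((blocks (cycleSetoid (swap x y * σ))).part y) = #((blocks (cycleSetoid σ)).part x) -
        #((blocks (cycleSetoid (swap x y * σ))).part x) := by
    intro y hy
    obtain ⟨hne, hy⟩ := mem_erase.1 hy
    have hxy : cycleSetoid σ x y := mem_part_blocks.1 hy
    have hdisj : Disjoint ((blocks (cycleSetoid (swap x y * σ))).part x)
        ((blocks (cycleSetoid (swap x y * σ))).part y) :=
      (blocks _).disjoint (part_mem_blocks _ x) (part_mem_blocks _ y)
        (part_blocks_eq_iff.not.2 (not_cycleSetoid_swap_mul_apply hne.symm hxy))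
    rw [← link_cycleSetoid_swap_mul hne.symm hxy, part_link_of_or (Or.inl ((cycleSetoid _).refl x)),
      card_union_of_disjoint hdisj, Nat.add_sub_cancel_left]
  rw [sum_congr rfl fun y hy ↦ by rw [hcard y hy], erase_part_cycleSetoid, sum_image]
  · refine sum_congr (by rw [card_part_cycleSetoid]) fun j hj ↦ ?_
    obtain ⟨hj0, hj⟩ := mem_Ico.1 hj
    rw [card_part_cycleSetoid σ] at hj
    rw [card_part_cycleSetoid (swap _ _ * σ), minimalPeriod_swap_mul hj0 hj]
  · exact (injOn_range_minimalPeriod σ x).mono fun i hi ↦ by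
      rw [coe_range]
      exact (mem_Ico.1 hi).2

end Cycles

section CutAndJoin

variable {α : Type*} [Fintype α] [DecidableEq α] {U V : Setoid α} {σ : Perm α} {x y : α}
  {S : Finset α}

theorem IsSaturated.sum_erase {M : Type*} [AddCancelCommMonoid M] (hS : IsSaturated U S)
    (hx : x ∈ S) (f : α → M) :
    ∑ y ∈ S.erase x, f y = ∑ y ∈ ((blocks U).part x).erase x, f y +
      ∑ c ∈ (blocksIn U S).erase ((blocks U).part x), ∑ y ∈ c, f y := by
  apply add_left_cancel (a := f x)
  rw [add_sum_erase S f hx, hS.sum_eq_sum_blocksIn, ← add_assoc,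
    add_sum_erase _ f (self_mem_part_blocks U x),
    add_sum_erase _ (fun c ↦ ∑ y ∈ c, f y) (hS.part_mem_blocksIn hx)]

open Classical in
/-- The contribution of a first factor `swap x y` to the recursion for the weight
`blocksWeight V (cycleSetoid σ)`. If it cuts a cycle of `σ`, then the orbits of the remaining
factors are the classes of a setoid `W` in which the class of `x` and `y` in `V` is split in two. -/
noncomputable def cutJoinWeight (V : Setoid α) (σ : Perm α) (x y : α) : ℚ :=
  if cycleSetoid σ x y then
    ∑ W with cycleSetoid (swap x y * σ) ≤ W ∧ link W x y = V ∧ ¬W x y,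
      blocksWeight W (cycleSetoid (swap x y * σ))
  else blocksWeight V (cycleSetoid (swap x y * σ))

theorem otherBlocks_swap_mul (hne : x ≠ y) (hxy : cycleSetoid σ x y) (hV : cycleSetoid σ ≤ V) :
    otherBlocks (cycleSetoid (swap x y * σ)) V x y =
      (blocksIn (cycleSetoid σ) ((blocks V).part x)).erase ((blocks (cycleSetoid σ)).part x) := by
  have hlink := link_cycleSetoid_swap_mul hne hxy
  have hV' : cycleSetoid (swap x y * σ) ≤ V := (hlink.symm ▸ le_link).trans hV
  have hnotMem : (blocks (cycleSetoid (swap x y * σ))).part x ∪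
      (blocks (cycleSetoid (swap x y * σ))).part y ∉
        otherBlocks (cycleSetoid (swap x y * σ)) V x y := fun h ↦
    part_union_part_notMem (erase_subset_erase _ (erase_subset_erase _ blocksIn_subset) h)
  rw [← hlink, blocksIn_link_part hV' (hV hxy), part_link_of_or (Or.inl (Setoid.refl' _ x)),
    erase_insert hnotMem]

theorem cutJoinWeight_of_rel (hne : x ≠ y) (hxy : cycleSetoid σ x y) (hV : cycleSetoid σ ≤ V) :
    cutJoinWeight V σ x y = restWeight V (cycleSetoid σ) x *
      splitWeight card
        ((blocksIn (cycleSetoid σ) ((blocks V).part x)).erase ((blocks (cycleSetoid σ)).part x))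
        #((blocks (cycleSetoid (swap x y * σ))).part x)
        #((blocks (cycleSetoid (swap x y * σ))).part y) := by
  have hlink := link_cycleSetoid_swap_mul hne hxy
  rw [cutJoinWeight, if_pos hxy, sum_blocksWeight_of_link_eq
    (not_cycleSetoid_swap_mul_apply hne hxy) ((hlink.symm ▸ le_link).trans hV) (hV hxy),
    otherBlocks_swap_mul hne hxy hV, ← restWeight_link _ (hV hxy), hlink]

theorem cutJoinWeight_of_not_rel (hxy : ¬cycleSetoid σ x y) (hV : cycleSetoid σ ≤ V)
    (hVxy : V x y) :
    cutJoinWeight V σ x y = restWeight V (cycleSetoid σ) x * hurwitzWeight card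
      (insert ((blocks (cycleSetoid σ)).part x ∪ (blocks (cycleSetoid σ)).part y)
        (otherBlocks (cycleSetoid σ) V x y)) := by
  rw [cutJoinWeight, if_neg hxy, cycleSetoid_swap_mul hxy, blocksWeight_link hV hVxy]

/-- The sum of the cut and join terms of one cycle `c` among the cycles in `C`, per element
of `c`. -/
noncomputable def cycleCutJoinWeight (C : Finset (Finset α)) (c : Finset α) : ℚ :=
  ∑ r ∈ Ico 1 #c, splitWeight card (C.erase c) r (#c - r) +
    ∑ d ∈ C.erase c, #d * hurwitzWeight card (insert (c ∪ d) ((C.erase c).erase d))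

theorem sum_cutJoinWeight_part_erase (hV : cycleSetoid σ ≤ V) (x : α) :
    ∑ y ∈ ((blocks V).part x).erase x, cutJoinWeight V σ x y =
      restWeight V (cycleSetoid σ) x * cycleCutJoinWeight
        (blocksIn (cycleSetoid σ) ((blocks V).part x)) ((blocks (cycleSetoid σ)).part x) := by
  rw [(isSaturated_part hV x).sum_erase (self_mem_part_blocks V x), cycleCutJoinWeight, mul_add]
  congr 1
  · rw [← sum_card_part_swap_mul, mul_sum]
    refine sum_congr rfl fun y hy ↦ ?_
    obtain ⟨hne, hy⟩ := mem_erase.1 hy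
    exact cutJoinWeight_of_rel hne.symm (mem_part_blocks.1 hy) hV
  · rw [mul_sum]
    refine sum_congr rfl fun d hd ↦ ?_
    obtain ⟨hdx, hd⟩ := mem_erase.1 hd
    obtain ⟨hd, hdV⟩ := mem_blocksIn.1 hd
    rw [mul_left_comm, ← nsmul_eq_mul]
    refine sum_eq_card_nsmul fun y hy ↦ ?_
    have hdy : (blocks (cycleSetoid σ)).part y = d := (blocks _).part_eq_of_mem hd hy
    have hxy : ¬cycleSetoid σ x y := fun h ↦ hdx (by rw [← hdy, part_blocks_eq_iff.2 h])
    rw [cutJoinWeight_of_not_rel hxy hV (mem_part_blocks.1 (hdV hy)), otherBlocks, hdy]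

theorem sum_card_mul_cycleCutJoinWeight {C : Finset (Finset α)} (hC : C.Nonempty)
    (hCU : C ⊆ (blocks U).parts) :
    ∑ c ∈ C, #c * cycleCutJoinWeight C c =
      2 * (∑ c ∈ C, (#c : ℚ) + #C - 2) * hurwitzWeight card C := by
  have hdisj : ∀ c ∈ C, ∀ d ∈ C.erase c, #(c ∪ d) = #c + #d := fun c hc d hd ↦
    card_union_of_disjoint ((blocks U).disjoint (hCU hc) (hCU (mem_of_mem_erase hd))
      (ne_of_mem_erase hd).symm)
  have hunion : ∀ c ∈ C, ∀ d ∈ C.erase c, c ∪ d ∉ (C.erase c).erase d := by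
    intro c hc d _ h
    obtain ⟨a, ha⟩ := (blocks U).nonempty_of_mem_parts (hCU hc)
    obtain ⟨hne, h⟩ := mem_erase.1 (mem_of_mem_erase h)
    exact hne ((blocks U).eq_of_mem_parts (hCU h) (hCU hc) (mem_union_left _ ha) ha)
  rw [← sum_splitWeight_add_joinWeight (fun c hc ↦ card_pos.2
    ((blocks U).nonempty_of_mem_parts (hCU hc))) hC,
    joinWeight_eq_sum_hurwitzWeight (· ∪ ·) hdisj hunion, ← sum_add_distrib]
  refine sum_congr rfl fun c _ ↦ ?_
  simp only [cycleCutJoinWeight, mul_add, mul_sum, mul_assoc]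

theorem sum_cutJoinWeight_of_mem_parts (hV : cycleSetoid σ ≤ V) (hS : S ∈ (blocks V).parts) :
    ∑ x ∈ S, ∑ y ∈ S.erase x, cutJoinWeight V σ x y =
      2 * (#S + #(blocksIn (cycleSetoid σ) S) - 2) * blocksWeight V (cycleSetoid σ) := by
  obtain ⟨z, rfl⟩ := exists_part_eq hS
  have hsat := isSaturated_part hV z
  set C := blocksIn (cycleSetoid σ) ((blocks V).part z) with hC
  have hx : ∀ x ∈ (blocks V).part z, ∑ y ∈ ((blocks V).part z).erase x, cutJoinWeight V σ x y =
      restWeight V (cycleSetoid σ) z *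
        cycleCutJoinWeight C ((blocks (cycleSetoid σ)).part x) := by
    intro x hx
    have hzx : (blocks V).part z = (blocks V).part x :=
      part_blocks_eq_iff.2 (mem_part_blocks.1 hx)
    rw [hC, hzx, sum_cutJoinWeight_part_erase hV, restWeight, restWeight, hzx]
  have hc : ∀ c ∈ C, ∑ x ∈ c, cycleCutJoinWeight C ((blocks (cycleSetoid σ)).part x) =
      #c * cycleCutJoinWeight C c := by
    intro c hc
    rw [← nsmul_eq_mul]
    exact sum_eq_card_nsmul fun x hx ↦ by
      rw [(blocks _).part_eq_of_mem (blocksIn_subset hc) hx]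
  rw [sum_congr rfl hx, ← mul_sum, hsat.sum_eq_sum_blocksIn, sum_congr rfl hc,
    sum_card_mul_cycleCutJoinWeight ⟨_, hsat.part_mem_blocksIn (self_mem_part_blocks V z)⟩
      blocksIn_subset, ← Nat.cast_sum, hsat.sum_card_blocksIn,
    ← hurwitzWeight_mul_restWeight V _ z]
  ring

theorem sum_cutJoinWeight (hV : cycleSetoid σ ≤ V) :
    ∑ x, ∑ y ∈ ((blocks V).part x).erase x, cutJoinWeight V σ x y =
      2 * (Fintype.card α + #(blocks (cycleSetoid σ)).parts - 2 * #(blocks V).parts) *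
        blocksWeight V (cycleSetoid σ) := by
  have hS : ∀ S ∈ (blocks V).parts,
      ∑ x ∈ S, ∑ y ∈ ((blocks V).part x).erase x, cutJoinWeight V σ x y =
        2 * (#S + #(blocksIn (cycleSetoid σ) S) - 2) * blocksWeight V (cycleSetoid σ) := by
    intro S hS
    rw [← sum_cutJoinWeight_of_mem_parts hV hS]
    exact sum_congr rfl fun x hx ↦ by rw [(blocks V).part_eq_of_mem hS hx]
  have hUniv : IsSaturated V univ := fun _ b _ _ ↦ mem_univ b
  rw [hUniv.sum_eq_sum_blocksIn, blocksIn_univ, sum_congr rfl hS, ← sum_mul, ← mul_sum,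
    sum_sub_distrib, sum_add_distrib, ← Nat.cast_sum, ← Nat.cast_sum, (blocks V).sum_card_parts,
    sum_card_blocksIn_parts hV, sum_const, card_univ, nsmul_eq_mul,
    mul_comm 2 (#(blocks V).parts : ℚ)]

end CutAndJoin

theorem swap_eq_swap_iff {α : Type*} [DecidableEq α] {x y a b : α} (hab : a ≠ b) :
    swap x y = swap a b ↔ x = a ∧ y = b ∨ x = b ∧ y = a := by
  refine ⟨fun h ↦ ?_, ?_⟩
  · have hxy : x ≠ y := fun hxy ↦ swap_eq_refl_iff.not.2 hab (h ▸ swap_eq_refl_iff.2 hxy)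
    have hx : swap a b x = y := h ▸ swap_apply_left x y
    rcases (swap_apply_ne_self_iff.1 (hx.trans_ne hxy.symm)).2 with rfl | rfl
    · exact Or.inl ⟨rfl, by rw [← hx, swap_apply_left]⟩
    · exact Or.inr ⟨rfl, by rw [← hx, swap_apply_right]⟩
  · rintro (⟨rfl, rfl⟩ | ⟨rfl, rfl⟩)
    · rfl
    · exact swap_comm _ _

section CardParts

variable {α : Type*} [Fintype α] [DecidableEq α] {U V : Setoid α} {σ : Perm α} {x y : α}

theorem card_parts_eq_card_iff : #(blocks V).parts = Fintype.card α ↔ V = ⊥ := by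
  have himage : (blocks V).parts = univ.image (blocks V).part := by
    ext B
    simp only [mem_image, mem_univ, true_and]
    exact ⟨exists_part_eq, fun ⟨x, hx⟩ ↦ hx ▸ part_mem_blocks V x⟩
  rw [himage, ← card_univ, card_image_iff, eq_bot_iff]
  refine ⟨fun hinj x y hxy ↦ hinj (mem_univ x) (mem_univ y) (part_blocks_eq_iff.2 hxy),
    fun hV x _ y _ hxy ↦ hV (part_blocks_eq_iff.1 hxy)⟩

theorem card_parts_le_of_le (hUV : U ≤ V) : #(blocks V).parts ≤ #(blocks U).parts := by
  rw [← sum_card_blocksIn_parts hUV, card_eq_sum_ones]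
  refine sum_le_sum fun S hS ↦ ?_
  obtain ⟨x, rfl⟩ := exists_part_eq hS
  exact card_pos.2 ⟨_, (isSaturated_part hUV x).part_mem_blocksIn (self_mem_part_blocks V x)⟩

theorem card_parts_swap_mul_add_one (hxy : ¬cycleSetoid σ x y) :
    #(blocks (cycleSetoid (swap x y * σ))).parts + 1 = #(blocks (cycleSetoid σ)).parts := by
  rw [cycleSetoid_swap_mul hxy, card_parts_link_add_one hxy]

theorem card_parts_swap_mul (hne : x ≠ y) (hxy : cycleSetoid σ x y) :
    #(blocks (cycleSetoid (swap x y * σ))).parts = #(blocks (cycleSetoid σ)).parts + 1 := by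
  rw [← card_parts_swap_mul_add_one (not_cycleSetoid_swap_mul_apply hne hxy), swap_mul_self_mul]

theorem blocksWeight_bot : blocksWeight (⊥ : Setoid α) ⊥ = 1 := by
  refine prod_eq_one fun B hB ↦ ?_
  obtain ⟨x, rfl⟩ := exists_part_eq hB
  have hpart : (blocks (⊥ : Setoid α)).part x = {x} := by
    ext y
    rw [mem_part_blocks, mem_singleton]
    exact eq_comm
  have hblocks : blocksIn ⊥ {x} = {{x}} := by
    ext c
    rw [mem_blocksIn, subset_singleton_iff, mem_singleton]
    refine ⟨fun ⟨hc, h⟩ ↦ h.resolve_left ((blocks _).ne_empty hc), ?_⟩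
    rintro rfl
    exact ⟨hpart ▸ part_mem_blocks ⊥ x, Or.inr rfl⟩
  rw [hpart, hblocks, hurwitzWeight]
  simp [cycleWeight, powWeight]

theorem two_nsmul_sum_isSwap {M : Type*} [AddCommMonoid M] [DecidablePred (Perm.IsSwap (α := α))]
    (g : Perm α → M) :
    2 • ∑ τ with τ.IsSwap, g τ = ∑ x, ∑ y ∈ univ.erase x, g (swap x y) := by
  rw [sum_sigma', ← sum_fiberwise_of_maps_to (t := {τ : Perm α | τ.IsSwap})
    (g := fun p : Σ _ : α, α ↦ swap p.1 p.2), smul_sum]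
  · refine sum_congr rfl fun τ hτ ↦ ?_
    obtain ⟨a, b, hab, rfl⟩ := (mem_filter.1 hτ).2
    have hfiber : {p ∈ (univ : Finset α).sigma fun x ↦ univ.erase x | swap p.1 p.2 = swap a b} =
        {⟨a, b⟩, ⟨b, a⟩} := by
      ext ⟨x, y⟩
      simp only [mem_filter, mem_sigma, mem_univ, mem_erase, true_and, and_true, mem_insert,
        mem_singleton, Sigma.mk.injEq, heq_eq_eq, swap_eq_swap_iff hab, and_iff_right_iff_imp]
      rintro (⟨rfl, rfl⟩ | ⟨rfl, rfl⟩)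
      exacts [hab.symm, hab]
    have hne : (⟨a, b⟩ : Σ _ : α, α) ≠ ⟨b, a⟩ := fun h ↦ hab (congrArg Sigma.fst h)
    rw [hfiber, sum_pair hne, swap_comm b a, two_nsmul]
  · rintro ⟨x, y⟩ hxy
    have hyx : y ≠ x := ne_of_mem_erase (mem_sigma.1 hxy).2
    exact mem_filter.2 ⟨mem_univ _, x, y, hyx.symm, rfl⟩

end CardParts

section Factorizations

variable {α : Type*} [Fintype α] [DecidableEq α] {V : Setoid α} {σ : Perm α} {x y : α} {m : ℕ}

open Classical in
/-- The factorizations of `σ` into `m` transpositions which generate a group whose orbits are the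
classes of `V`. -/
noncomputable def factorizations (m : ℕ) (V : Setoid α) (σ : Perm α) : Finset (Fin m → Perm α) :=
  {f | (∀ i, (f i).IsSwap) ∧ (List.ofFn f).prod = σ ∧ ⨆ i, cycleSetoid (f i) = V}

theorem mem_factorizations {f : Fin m → Perm α} : f ∈ factorizations m V σ ↔
    (∀ i, (f i).IsSwap) ∧ (List.ofFn f).prod = σ ∧ ⨆ i, cycleSetoid (f i) = V := by
  simp only [factorizations, mem_filter, mem_univ, true_and]

theorem mem_factorizations_zero {f : Fin 0 → Perm α} :
    f ∈ factorizations 0 V σ ↔ σ = 1 ∧ V = ⊥ := by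
  simp only [mem_factorizations, IsEmpty.forall_iff, List.ofFn_zero, List.prod_nil, true_and,
    iSup_of_empty, eq_comm]

theorem cons_swap_mem_factorizations (hne : x ≠ y) {f : Fin m → Perm α} :
    Fin.cons (swap x y) f ∈ factorizations (m + 1) V σ ↔
      ∃ W, link W x y = V ∧ f ∈ factorizations m W (swap x y * σ) := by
  have hsup : ⨆ i, cycleSetoid (Fin.cons (α := fun _ ↦ Perm α) (swap x y) f i) =
      link (⨆ i, cycleSetoid (f i)) x y := by
    rw [← sup_cycleSetoid_swap, sup_comm]
    refine eq_of_forall_ge_iff fun W ↦ ?_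
    simp only [iSup_le_iff, sup_le_iff, Fin.forall_fin_succ, Fin.cons_zero, Fin.cons_succ]
  have hprod : swap x y * (List.ofFn f).prod = σ ↔ (List.ofFn f).prod = swap x y * σ := by
    rw [← eq_inv_mul_iff_mul_eq, swap_inv]
  simp only [mem_factorizations, Fin.forall_fin_succ, Fin.cons_zero, Fin.cons_succ, List.ofFn_cons,
    List.prod_cons, hsup, hprod]
  constructor
  · rintro ⟨⟨-, hf⟩, hσ, hV⟩
    exact ⟨_, hV, hf, hσ, rfl⟩
  · rintro ⟨_, hV, hf, hσ, rfl⟩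
    exact ⟨⟨⟨x, y, hne, rfl⟩, hf⟩, hσ, hV⟩

theorem exists_eq_cons_of_mem_factorizations {f : Fin (m + 1) → Perm α}
    (hf : f ∈ factorizations (m + 1) V σ) : ∃ x y, x ≠ y ∧ ∃ W, link W x y = V ∧
      Fin.tail f ∈ factorizations m W (swap x y * σ) := by
  obtain ⟨x, y, hne, hswap⟩ := (mem_factorizations.1 hf).1 0
  rw [← Fin.cons_self_tail f, hswap, cons_swap_mem_factorizations hne] at hf
  exact ⟨x, y, hne, hf⟩

theorem cycleSetoid_le_of_mem_factorizations {f : Fin m → Perm α}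
    (hf : f ∈ factorizations m V σ) : cycleSetoid σ ≤ V := by
  obtain ⟨-, rfl, rfl⟩ := mem_factorizations.1 hf
  refine List.prod_induction (cycleSetoid · ≤ _) (fun _ _ ha hb ↦ cycleSetoid_mul_le hb ha)
    (cycleSetoid_one.trans_le bot_le) fun τ hτ ↦ ?_
  obtain ⟨i, rfl⟩ := List.mem_ofFn.1 hτ
  exact le_iSup (fun i ↦ cycleSetoid (f i)) i

/-- The Riemann–Hurwitz inequality: the genus is nonnegative. -/
theorem card_add_card_parts_le {f : Fin m → Perm α} (hf : f ∈ factorizations m V σ) :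
    Fintype.card α + #(blocks (cycleSetoid σ)).parts ≤ m + 2 * #(blocks V).parts := by
  induction m generalizing V σ with
  | zero =>
    obtain ⟨rfl, rfl⟩ := mem_factorizations_zero.1 hf
    rw [cycleSetoid_one, card_parts_eq_card_iff.2 rfl]
    omega
  | succ m ih =>
    obtain ⟨x, y, hne, W, rfl, htail⟩ := exists_eq_cons_of_mem_factorizations hf
    have ih := ih htail
    by_cases hW : W x y
    · rw [link_eq_self hW]
      by_cases hxy : cycleSetoid σ x y
      · have := card_parts_swap_mul hne hxy
        omega
      · have := card_parts_swap_mul_add_one hxy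
        omega
    · have hxy : cycleSetoid σ x y := by
        by_contra hxy
        exact hW (cycleSetoid_le_of_mem_factorizations htail (cycleSetoid_swap_mul_apply hxy))
      have := card_parts_swap_mul hne hxy
      have := card_parts_link_add_one hW
      omega

open Classical in
theorem card_filter_apply_zero_factorizations (hne : x ≠ y) :
    #{f ∈ factorizations (m + 1) V σ | f 0 = swap x y} =
      ∑ W with link W x y = V, #(factorizations m W (swap x y * σ)) := by
  have hdisj : Set.PairwiseDisjoint (({W | link W x y = V} : Finset (Setoid α)) : Set (Setoid α))
      fun W ↦ factorizations m W (swap x y * σ) := fun W _ W' _ hWW' ↦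
    disjoint_left.2 fun f hf hf' ↦ hWW'
      ((mem_factorizations.1 hf).2.2.symm.trans (mem_factorizations.1 hf').2.2)
  rw [← card_biUnion hdisj]
  refine card_nbij' Fin.tail (Fin.cons (α := fun _ ↦ Perm α) (swap x y)) ?_ ?_ ?_
    fun f _ ↦ Fin.tail_cons (α := fun _ ↦ Perm α) _ f
  · intro f hf
    obtain ⟨hf, hf0⟩ := mem_filter.1 hf
    rw [← Fin.cons_self_tail f, hf0, cons_swap_mem_factorizations hne] at hf
    simpa only [mem_coe, mem_biUnion, mem_filter, mem_univ, true_and] using hf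
  · intro f hf
    simp only [mem_coe, mem_biUnion, mem_filter, mem_univ, true_and] at hf
    exact mem_filter.2 ⟨(cons_swap_mem_factorizations hne).2 hf, Fin.cons_zero _ _⟩
  · intro f hf
    rw [← (mem_filter.1 hf).2, Fin.cons_self_tail]

open Classical in
theorem two_mul_card_factorizations_succ (m : ℕ) (V : Setoid α) (σ : Perm α) :
    2 * #(factorizations (m + 1) V σ) = ∑ x, ∑ y ∈ ((blocks V).part x).erase x,
      ∑ W with link W x y = V, #(factorizations m W (swap x y * σ)) := by
  rw [card_eq_sum_card_fiberwise (f := fun f ↦ f 0) (t := {τ | τ.IsSwap})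
    fun f hf ↦ mem_filter.2 ⟨mem_univ _, (mem_factorizations.1 hf).1 0⟩, ← smul_eq_mul,
    two_nsmul_sum_isSwap]
  refine sum_congr rfl fun x _ ↦ ?_
  rw [sum_congr rfl fun y hy ↦ card_filter_apply_zero_factorizations (ne_of_mem_erase hy).symm]
  refine (sum_subset (erase_subset_erase x (subset_univ _)) fun y hy hyV ↦ ?_).symm
  refine sum_eq_zero fun W hW ↦ absurd ?_ hyV
  rw [← (mem_filter.1 hW).2]
  exact mem_erase.2 ⟨ne_of_mem_erase hy, mem_part_blocks.2 link_left_right⟩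

theorem card_factorizations_zero (hV : cycleSetoid σ ≤ V)
    (h : Fintype.card α + #(blocks (cycleSetoid σ)).parts = 2 * #(blocks V).parts) :
    (#(factorizations 0 V σ) : ℚ) = blocksWeight V (cycleSetoid σ) := by
  have hVσ := card_parts_le_of_le hV
  have hσ := card_parts_le_of_le (bot_le (a := cycleSetoid σ))
  rw [card_parts_eq_card_iff.2 rfl] at hσ
  obtain rfl : V = ⊥ := card_parts_eq_card_iff.1 (by omega)
  obtain rfl : σ = 1 := Perm.ext fun a ↦ (hV (cycleSetoid_apply_self σ a)).symm
  have huniv : factorizations 0 ⊥ (1 : Perm α) = univ :=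
    eq_univ_of_forall fun f ↦ mem_factorizations_zero.2 ⟨rfl, rfl⟩
  rw [huniv, card_univ, Fintype.card_unique, cycleSetoid_one, blocksWeight_bot, Nat.cast_one]

open Classical in
theorem sum_card_factorizations_of_rel (hne : x ≠ y) (hxy : cycleSetoid σ x y)
    (h : Fintype.card α + #(blocks (cycleSetoid σ)).parts = m + 1 + 2 * #(blocks V).parts)
    (ih : ∀ W, cycleSetoid (swap x y * σ) ≤ W →
      Fintype.card α + #(blocks (cycleSetoid (swap x y * σ))).parts = m + 2 * #(blocks W).parts →
      (#(factorizations m W (swap x y * σ)) : ℚ) =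
        m.factorial * blocksWeight W (cycleSetoid (swap x y * σ))) :
    ∑ W with link W x y = V, (#(factorizations m W (swap x y * σ)) : ℚ) =
      m.factorial * cutJoinWeight V σ x y := by
  have hσ := card_parts_swap_mul hne hxy
  rw [cutJoinWeight, if_pos hxy, mul_sum]
  symm
  refine sum_subset_zero_on_sdiff (fun W hW ↦ ?_) (fun W hW ↦ ?_) fun W hW ↦ ?_
  · simp only [mem_filter, mem_univ, true_and] at hW ⊢
    exact hW.2.1
  · simp only [mem_sdiff, mem_filter, mem_univ, true_and] at hW
    obtain ⟨rfl, hnot⟩ := hW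
    rw [Nat.cast_eq_zero, card_eq_zero]
    refine eq_empty_of_forall_notMem fun f hf ↦ ?_
    have hWxy : W x y := by
      by_contra hWxy
      exact hnot ⟨cycleSetoid_le_of_mem_factorizations hf, rfl, hWxy⟩
    have hRH := card_add_card_parts_le hf
    rw [link_eq_self hWxy] at h
    omega
  · obtain ⟨hle, rfl, hWxy⟩ := (mem_filter.1 hW).2
    have hW := card_parts_link_add_one hWxy
    exact (ih W hle (by omega)).symm

open Classical in
theorem sum_card_factorizations_of_not_rel (hxy : ¬cycleSetoid σ x y) (hV : V x y)
    (hσV : cycleSetoid σ ≤ V)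
    (h : Fintype.card α + #(blocks (cycleSetoid σ)).parts = m + 1 + 2 * #(blocks V).parts)
    (ih : cycleSetoid (swap x y * σ) ≤ V →
      Fintype.card α + #(blocks (cycleSetoid (swap x y * σ))).parts = m + 2 * #(blocks V).parts →
      (#(factorizations m V (swap x y * σ)) : ℚ) =
        m.factorial * blocksWeight V (cycleSetoid (swap x y * σ))) :
    ∑ W with link W x y = V, (#(factorizations m W (swap x y * σ)) : ℚ) =
      m.factorial * cutJoinWeight V σ x y := by
  have hσ := card_parts_swap_mul_add_one hxy
  have hle : cycleSetoid (swap x y * σ) ≤ V := by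
    rw [cycleSetoid_swap_mul hxy, link_le_iff]
    exact ⟨hσV, hV⟩
  rw [cutJoinWeight, if_neg hxy, ← ih hle (by omega)]
  refine sum_eq_single_of_mem V (mem_filter.2 ⟨mem_univ _, link_eq_self hV⟩) fun W hW hWV ↦ ?_
  rw [Nat.cast_eq_zero, card_eq_zero]
  refine eq_empty_of_forall_notMem fun f hf ↦ hWV ?_
  rw [← (mem_filter.1 hW).2, link_eq_self
    (cycleSetoid_le_of_mem_factorizations hf (cycleSetoid_swap_mul_apply hxy))]

theorem card_factorizations (hV : cycleSetoid σ ≤ V)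
    (h : Fintype.card α + #(blocks (cycleSetoid σ)).parts = m + 2 * #(blocks V).parts) :
    (#(factorizations m V σ) : ℚ) = m.factorial * blocksWeight V (cycleSetoid σ) := by
  classical
  induction m generalizing V σ with
  | zero =>
    rw [card_factorizations_zero hV (by omega), Nat.factorial_zero, Nat.cast_one, one_mul]
  | succ m ih =>
    have hsum : ∀ x, ∀ y ∈ ((blocks V).part x).erase x,
        ∑ W with link W x y = V, (#(factorizations m W (swap x y * σ)) : ℚ) =
          m.factorial * cutJoinWeight V σ x y := by
      intro x y hy
      obtain ⟨hne, hy⟩ := mem_erase.1 hy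
      by_cases hxy : cycleSetoid σ x y
      · exact sum_card_factorizations_of_rel hne.symm hxy h fun _ ↦ ih
      · exact sum_card_factorizations_of_not_rel hxy (mem_part_blocks.1 hy) hV h ih
    have hm : (Fintype.card α + #(blocks (cycleSetoid σ)).parts - 2 * #(blocks V).parts : ℚ) =
        m + 1 := by
      rw [sub_eq_iff_eq_add]
      exact_mod_cast h
    have hrec := congrArg (Nat.cast : ℕ → ℚ) (two_mul_card_factorizations_succ m V σ)
    push_cast at hrec
    rw [sum_congr rfl fun x _ ↦ sum_congr rfl (hsum x)] at hrec
    simp only [← mul_sum] at hrec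
    rw [sum_cutJoinWeight hV, hm] at hrec
    rw [Nat.factorial_succ]
    push_cast
    linarith

end Factorizations

section Transitivity

variable {α ι : Type*} {f : ι → Perm α}

theorem cycleSetoid_inv (σ : Perm α) : cycleSetoid σ⁻¹ = cycleSetoid σ :=
  Setoid.ext fun _ _ ↦ Perm.sameCycle_inv

theorem forall_exists_mem_closure_apply_eq_iff :
    (∀ x y, ∃ g ∈ Subgroup.closure (Set.range f), g x = y) ↔ ⨆ i, cycleSetoid (f i) = ⊤ := by
  refine ⟨fun h ↦ eq_top_iff.2 fun x y _ ↦ ?_, fun h x y ↦ ?_⟩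
  · obtain ⟨g, hg, rfl⟩ := h x y
    suffices hle : cycleSetoid g ≤ ⨆ i, cycleSetoid (f i) from hle (cycleSetoid_apply_self g x)
    clear * - hg
    induction hg using Subgroup.closure_induction with
    | mem τ hτ =>
      obtain ⟨i, rfl⟩ := hτ
      exact le_iSup (fun i ↦ cycleSetoid (f i)) i
    | one => exact cycleSetoid_one.trans_le bot_le
    | mul a b _ _ ha hb => exact cycleSetoid_mul_le hb ha
    | inv a _ ha => rwa [cycleSetoid_inv]
  · have hle : ⨆ i, cycleSetoid (f i) ≤
        MulAction.orbitRel (Subgroup.closure (Set.range f)) α := by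
      refine iSup_le fun i ↦ cycleSetoid_le_iff.2 fun a ↦ Setoid.symm' _ ?_
      exact ⟨⟨f i, Subgroup.subset_closure ⟨i, rfl⟩⟩, rfl⟩
    obtain ⟨g, hg⟩ := Setoid.symm' _ (hle (h ▸ trivial : (⨆ i, cycleSetoid (f i)) x y))
    exact ⟨g, g.2, hg⟩

theorem closure_singleton_union_range {m : ℕ} {σ : Perm α} {f : Fin m → Perm α}
    (h : σ * (List.ofFn f).prod = 1) :
    Subgroup.closure ({σ} ∪ Set.range f) = Subgroup.closure (Set.range f) := by
  refine le_antisymm ((Subgroup.closure_le _).2 (Set.union_subset ?_ Subgroup.subset_closure))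
    (Subgroup.closure_mono Set.subset_union_right)
  rw [Set.singleton_subset_iff, eq_inv_of_mul_eq_one_left h]
  refine inv_mem (Subgroup.list_prod_mem _ fun τ hτ ↦ Subgroup.subset_closure ?_)
  exact List.mem_ofFn.1 hτ

end Transitivity

section HurwitzFormula

variable {α : Type*} [Fintype α] [DecidableEq α] {σ : Perm α} {m : ℕ}

theorem part_cycleSetoid_of_mem_support {x : α} (hx : x ∈ σ.support) :
    (blocks (cycleSetoid σ)).part x = (σ.cycleOf x).support := by
  ext y
  rw [mem_part_blocks, Perm.mem_support_cycleOf_iff]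
  exact (and_iff_left hx).symm

theorem part_cycleSetoid_of_notMem_support {x : α} (hx : x ∉ σ.support) :
    (blocks (cycleSetoid σ)).part x = {x} := by
  rw [part_cycleSetoid, Function.minimalPeriod_eq_one_iff_isFixedPt.2 (Perm.notMem_support.1 hx)]
  rfl

@[to_additive]
theorem prod_parts_cycleSetoid {M : Type*} [CommMonoid M] (σ : Perm α) {f : ℕ → M}
    (hf : f 1 = 1) :
    ∏ c ∈ (blocks (cycleSetoid σ)).parts, f #c = (σ.cycleType.map f).prod := by
  rw [Perm.cycleType_def, Multiset.map_map]
  symm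
  refine prod_of_injOn Perm.support (fun c hc d hd hcd ↦ ?_) (fun c hc ↦ ?_) (fun B hB hnot ↦ ?_)
    fun c _ ↦ rfl
  · obtain ⟨x, hx⟩ := (Perm.mem_cycleFactorsFinset_iff.1 hc).1.nonempty_support
    rw [Perm.cycle_is_cycleOf hx hc, Perm.cycle_is_cycleOf (hcd ▸ hx) hd]
  · obtain ⟨x, hx⟩ := (Perm.mem_cycleFactorsFinset_iff.1 hc).1.nonempty_support
    have hxσ := Perm.mem_cycleFactorsFinset_support_le hc hx
    rw [Perm.cycle_is_cycleOf hx hc, ← part_cycleSetoid_of_mem_support hxσ]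
    exact part_mem_blocks _ x
  · obtain ⟨x, rfl⟩ := exists_part_eq hB
    have hx : x ∉ σ.support := fun hx ↦ hnot ⟨σ.cycleOf x,
      Perm.cycleOf_mem_cycleFactorsFinset_iff.2 hx, (part_cycleSetoid_of_mem_support hx).symm⟩
    rw [part_cycleSetoid_of_notMem_support hx, card_singleton, hf]

/-- The total ramification `∑ (k - 1)` over a branch point of cycle type `μ`. -/
def branching (μ : Multiset ℕ) : ℕ :=
  (μ.map (· - 1)).sum

theorem card_parts_cycleSetoid_add (σ : Perm α) :
    #(blocks (cycleSetoid σ)).parts + branching σ.cycleType = Fintype.card α := by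
  rw [branching, ← sum_parts_cycleSetoid σ (f := (· - 1)) rfl, ← card_univ,
    ← (blocks (cycleSetoid σ)).sum_card_parts, card_eq_sum_ones, ← sum_add_distrib]
  exact sum_congr rfl fun c hc ↦ Nat.add_sub_of_le
    (card_pos.2 ((blocks _).nonempty_of_mem_parts hc))

theorem parts_blocks_top [Nonempty α] : (blocks (⊤ : Setoid α)).parts = {univ} := by
  have hpart : ∀ x, (blocks (⊤ : Setoid α)).part x = univ := fun x ↦
    eq_univ_of_forall fun y ↦ mem_part_blocks.2 trivial
  obtain ⟨x⟩ := ‹Nonempty α›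
  refine eq_singleton_iff_unique_mem.2 ⟨?_, fun B hB ↦ ?_⟩
  · simpa only [hpart] using part_mem_blocks (⊤ : Setoid α) x
  · obtain ⟨y, rfl⟩ := exists_part_eq hB
    exact hpart y

theorem blocksWeight_top_cycleSetoid [Nonempty α] (σ : Perm α) :
    blocksWeight ⊤ (cycleSetoid σ) =
      (Fintype.card α : ℚ) ^ (Fintype.card α - branching σ.cycleType - 3 : ℤ) *
        (σ.cycleType.map cycleWeight).prod := by
  have hcard : ((#(blocks (cycleSetoid σ)).parts : ℕ) : ℤ) =
      Fintype.card α - branching σ.cycleType :=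
    eq_sub_of_add_eq (by exact_mod_cast card_parts_cycleSetoid_add σ)
  have hone : cycleWeight 1 = 1 := by simp [cycleWeight, powWeight]
  rw [blocksWeight, parts_blocks_top, prod_singleton, blocksIn_univ, hurwitzWeight, hcard,
    prod_parts_cycleSetoid σ hone, ← Nat.cast_sum, (blocks (cycleSetoid σ)).sum_card_parts,
    card_univ]

theorem isHurwitzTuple_iff {m : ℕ} {μ : Multiset ℕ} {p : Perm α × (Fin m → Perm α)} :
    (p.1.cycleType = μ ∧ (∀ i, (p.2 i).IsSwap) ∧ p.1 * (List.ofFn p.2).prod = 1 ∧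
      ∀ x y : α, ∃ g ∈ Subgroup.closure ({p.1} ∪ Set.range p.2), g x = y) ↔
    p.1.cycleType = μ ∧ p.2 ∈ factorizations m ⊤ p.1⁻¹ := by
  rw [mem_factorizations, ← mul_eq_one_iff_eq_inv']
  refine and_congr_right' (and_congr_right' (and_congr_right fun h ↦ ?_))
  rw [closure_singleton_union_range h, forall_exists_mem_closure_apply_eq_iff]

theorem card_hurwitzTuples [Nonempty α] (μ : Multiset ℕ) {m : ℕ}
    (hm : m + branching μ + 2 = 2 * Fintype.card α) :
    (Nat.card {p : Perm α × (Fin m → Perm α) //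
        p.1.cycleType = μ ∧ (∀ i, (p.2 i).IsSwap) ∧ p.1 * (List.ofFn p.2).prod = 1 ∧
        ∀ x y : α, ∃ g ∈ Subgroup.closure ({p.1} ∪ Set.range p.2), g x = y} : ℚ) =
      #{σ : Perm α | σ.cycleType = μ} * (m.factorial *
        ((Fintype.card α : ℚ) ^ (Fintype.card α - branching μ - 3 : ℤ) *
          (μ.map cycleWeight).prod)) := by
  classical
  have hσ : ∀ σ ∈ ({σ | σ.cycleType = μ} : Finset (Perm α)),
      (#(factorizations m ⊤ σ⁻¹) : ℚ) = m.factorial *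
        ((Fintype.card α : ℚ) ^ (Fintype.card α - branching μ - 3 : ℤ) *
          (μ.map cycleWeight).prod) := by
    intro σ hσ
    obtain rfl := (mem_filter.1 hσ).2
    have hcard := card_parts_cycleSetoid_add σ
    rw [card_factorizations le_top, cycleSetoid_inv, blocksWeight_top_cycleSetoid]
    rw [cycleSetoid_inv, parts_blocks_top, card_singleton]
    omega
  simp only [isHurwitzTuple_iff]
  rw [Nat.card_eq_fintype_card, Fintype.card_subtype, card_filter, Fintype.sum_prod_type]
  have hfiber (σ : Perm α) :
      (∑ f, if σ.cycleType = μ ∧ f ∈ factorizations m ⊤ σ⁻¹ then 1 else 0) =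
        if σ.cycleType = μ then #(factorizations m ⊤ σ⁻¹) else 0 := by
    by_cases h : σ.cycleType = μ <;> simp [h]
  rw [sum_congr rfl fun σ _ ↦ hfiber σ, ← sum_filter, Nat.cast_sum, sum_congr rfl hσ, sum_const,
    nsmul_eq_mul]

theorem card_perm_cycleType_two_two_two (h : 6 ≤ Fintype.card α) :
    (#{σ : Perm α | σ.cycleType = {2, 2, 2}} : ℚ) =
      (Fintype.card α).factorial / ((Fintype.card α - 6).factorial * 48) := by
  have hcard := Perm.card_of_cycleType_mul_eq α {2, 2, 2}
  have hcount : ∏ k ∈ ({2, 2, 2} : Multiset ℕ).toFinset,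
      (({2, 2, 2} : Multiset ℕ).count k).factorial = 6 := by decide
  rw [hcount, show ({2, 2, 2} : Multiset ℕ).sum = 6 from rfl,
    show ({2, 2, 2} : Multiset ℕ).prod = 8 from rfl, if_pos ⟨h, by simp⟩] at hcard
  rw [eq_div_iff (by positivity), ← hcard]
  push_cast
  ring

end HurwitzFormula

end HurwitzNumber

/-- Genus-zero Hurwitz number h_{1^3}: one branch point of cycle type (2,2,2,1^{n-6}) and 2n-5 transpositions; h_{1^3} = (4/3) * ((2n-5)!/(n-6)!) * n^(n-6). -/
theorem hurwitz_number_1_3 (n : ℕ) (hn : 6 ≤ n) :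
    (Nat.card {p : Perm (Fin n) × (Fin (2 * n - 5) → Perm (Fin n)) //
        p.1.cycleType = {2, 2, 2} ∧
        (∀ i, (p.2 i).IsSwap) ∧
        p.1 * (List.ofFn p.2).prod = 1 ∧
        (∀ x y : Fin n, ∃ g ∈ Subgroup.closure ({p.1} ∪ Set.range p.2),
          g x = y)} : ℚ) =
      (n.factorial : ℚ) * (4 / 3) *
        (((2 * n - 5).factorial : ℚ) / ((n - 6).factorial : ℚ)) *
        (n : ℚ) ^ ((n : ℤ) - 6) := by
  have : Nonempty (Fin n) := ⟨⟨0, by omega⟩⟩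
  have hbranching : HurwitzNumber.branching {2, 2, 2} = 3 := rfl
  have hweight : (({2, 2, 2} : Multiset ℕ).map HurwitzNumber.cycleWeight).prod = 64 := by
    norm_num [HurwitzNumber.cycleWeight, HurwitzNumber.powWeight]
  rw [HurwitzNumber.card_hurwitzTuples {2, 2, 2} (by rw [hbranching, Fintype.card_fin]; omega),
    HurwitzNumber.card_perm_cycleType_two_two_two (by rwa [Fintype.card_fin]), hbranching, hweight,
    Fintype.card_fin]
  have hexp : (n : ℤ) - (3 : ℕ) - 3 = n - 6 := by omega
  rw [hexp]
  field_simp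
  norm_num
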